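/- (Max balance II, existence) Any LD limit point ρ of the invariant measures P^n satisfies max balance: Φ_ρ(A',A'') = Φ_ρ(A'',A') for every nontrivial partition {A',A''} of A. -/

import Mathlib

open Filter Topology Metric Set MeasureTheory
open scoped NNReal

noncomputable section

/-- A deviability density on a topological space `E`. -/
def IsDeviabilityDensity {E : Type*} [TopologicalSpace E] (p : E → ℝ) : Prop :=
  (∀ x, p x ∈ Set.Icc (0:ℝ) 1) ∧ (⨆ x, p x) = 1 ∧
    ∀ γ ∈ Set.Ioc (0:ℝ) 1, IsCompact {x | γ ≤ p x}

variable {S : Type*} [MetricSpace S]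

/-- Time shift `θ_s` on continuous paths. -/
def pshift (s : ℝ≥0) (X : C(ℝ≥0, S)) : C(ℝ≥0, S) :=
  ⟨fun t => X (s + t), X.continuous.comp (continuous_const.add continuous_id)⟩

/-- `Π_{x,t}(y)`. -/
def transDen (Px : S → C(ℝ≥0, S) → ℝ) (x : S) (t : ℝ≥0) (y : S) : ℝ :=
  ⨆ X ∈ {X : C(ℝ≥0, S) | X t = y}, Px x X

/-- The standing assumptions (2.2)--(2.5) of the paper, together with the basic
assumptions on the family of path deviability densities `Px` and the set `A`. -/
structure DevSetup (S : Type*) [MetricSpace S] (Px : S → C(ℝ≥0, S) → ℝ) (A : Set S) :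
    Prop where
  dev : ∀ x, IsDeviabilityDensity (Px x)
  start : ∀ x (X : C(ℝ≥0, S)), X 0 ≠ x → Px x X = 0
  /-- (2.2) upper semicontinuity -/
  usc : UpperSemicontinuous (fun q : S × C(ℝ≥0, S) => Px q.1 q.2)
  /-- (2.2) uniform upper compactness -/
  cpt : ∀ K : Set S, IsCompact K → ∀ γ ∈ Set.Ioc (0:ℝ) 1,
    IsCompact (⋃ x ∈ K, {X : C(ℝ≥0, S) | γ ≤ Px x X})
  /-- (2.3) the maxitive Markov property -/
  markov : ∀ x (X : C(ℝ≥0, S)) (s : ℝ≥0),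
    Px x X = (⨆ X' ∈ {X' : C(ℝ≥0, S) | ∀ u ≤ s, X' u = X u}, Px x X') *
      Px (X s) (pshift s X)
  /-- (2.4) `A` is locally finite -/
  locFin : ∀ K : Set S, IsCompact K → (K ∩ A).Finite
  /-- (2.4)(i) -/
  attract : ∀ x (X : C(ℝ≥0, S)), Px x X = 1 → (⨅ t : ℝ≥0, infDist (X t) A) = 0
  /-- (2.4)(ii) -/
  equil : ∀ a ∈ A, Px a (ContinuousMap.const ℝ≥0 a) = 1
  /-- (2.4)(iii) -/
  connect : ∀ a ∈ A, ∀ a' ∈ A, ∃ t : ℝ≥0, 0 < t ∧ 0 < transDen Px a t a'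
  /-- (2.4)(iv) -/
  nearA : ∀ ε : ℝ, 0 < ε → ∃ δ : ℝ, 0 < δ ∧ ∀ x : S, infDist x A < δ →
    ∃ s₀ s₁ : ℝ≥0, 0 < s₀ ∧ 0 < s₁ ∧ ∃ a ∈ A,
      1 - ε < transDen Px x s₀ a ∧ 1 - ε < transDen Px a s₁ x
  /-- (2.4)(v) -/
  localMove : ∀ x : S, ∀ ε : ℝ, 0 < ε → ∃ δ : ℝ, 0 < δ ∧ ∃ t₀ t₁ : ℝ≥0,
    ∀ x' : S, dist x x' < δ →
      1 - ε < transDen Px x t₀ x' ∧ 1 - ε < transDen Px x' t₁ x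
  /-- (2.5) uniform tightness -/
  tight : ∀ K₁ : Set S, IsCompact K₁ → ∀ ε : ℝ, 0 < ε → ∃ K₂ : Set S, IsCompact K₂ ∧
    Filter.limsup (fun t : ℝ≥0 => ⨆ x ∈ K₁, ⨆ y ∈ K₂ᶜ, transDen Px x t y) atTop < ε

/-- LD convergence at the given rate of a sequence of Borel probability measures to a
deviability density. -/
def LDConv {E : Type*} [TopologicalSpace E] [MeasurableSpace E]
    (Q : ℕ → Measure E) (rate : ℕ → ℕ) (p : E → ℝ) : Prop :=
  ∀ f : E → ℝ, Continuous f → (∀ x, 0 ≤ f x) → BddAbove (Set.range f) →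
    Tendsto (fun n => (∫ x, (f x) ^ (rate n) ∂(Q n)) ^ ((rate n : ℝ)⁻¹)) atTop
      (𝓝 (⨆ x, f x * p x))

variable [MeasurableSpace S] [BorelSpace S]

/-- The max flux `Φ_ρ(Γ,Γ')` relative to the limiting transition density `PL`. -/
def maxFlux (PL : S → S → ℝ) (ρ : S → ℝ) (Γ Γ' : Set S) : ℝ :=
  ⨆ x ∈ Γ, ρ x * ⨆ y ∈ Γ', PL x y

/-- `Φ_ρ(Γ, x)`, the max flux into a point. -/
def maxFluxPt (PL : S → S → ℝ) (ρ : S → ℝ) (Γ : Set S) (x : S) : ℝ :=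
  ⨆ a ∈ Γ, ρ a * PL a x

/-!
Under an invariant law the mass of one time step of the chain from a set to its complement equals
the mass of the way back. On the exponential scale this says: if `U ⊆ D` with `U` open and `D`
closed, and `ρ x * Π_{x,t} y ≤ c` whenever `x ∈ D` and `y ∉ U`, then the same bound holds whenever
`x ∉ D` and `y ∈ U`.

Write `F = Φ_ρ(A',A'')` and `G = Φ_ρ(A'',A')`, suppose `G < F`, let `c` be their mean, and cut `S`
at the level `c` of `g = Φ_ρ(A'',·)`, which is continuous by (2.4)(v): `D = {c ≤ g}` and
`U = {c < g}`. By tightness and attraction a path that is not too costly soon comes close to `A`, so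
for large `t` one has `Π_{x,t} y ≤ Π(x,b) Π(b,y) + ε` for some `b ∈ A`. Let `x ∈ D` and `y ∉ U`. If
`b ∈ A''`, then `ρ x Π(x,b) Π(b,y) ≤ ρ b Π(b,y) ≤ g y ≤ c`. If `b ∈ A'`, then
`c Π(x,b) ≤ g x Π(x,b) ≤ G`, while `ρ x` is at most `Φ_ρ(A',x)` or `g x`. In the second case
`ρ x Π(x,b) ≤ G ≤ c`. In the first, `x` leads at no cost into `A''`, as otherwise `g x ≤ G < c`,
so `ρ x ≤ F`; hence `ρ x Π(x,b) ≤ F G / c ≤ c`. Therefore all fluxes from `A' ⊆ Dᶜ` into `U` are at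
most `c` as well, contradicting `c < F`.
-/

section Supremum

variable {ι : Type*} {f : ι → ℝ} {s t : Set ι} {c : ℝ}

lemma biSup_le_of_nonneg (hc : 0 ≤ c) (h : ∀ i ∈ s, f i ≤ c) : ⨆ i ∈ s, f i ≤ c :=
  Real.iSup_le (fun i => Real.iSup_le (h i) hc) hc

lemma biSup_nonneg_of_forall (h : ∀ i ∈ s, 0 ≤ f i) : 0 ≤ ⨆ i ∈ s, f i :=
  Real.iSup_nonneg fun i => Real.iSup_nonneg (h i)

lemma biSup_mem_unitInterval (h : ∀ i ∈ s, f i ∈ Icc (0 : ℝ) 1) : ⨆ i ∈ s, f i ∈ Icc (0 : ℝ) 1 :=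
  ⟨biSup_nonneg_of_forall fun i hi => (h i hi).1,
    biSup_le_of_nonneg zero_le_one fun i hi => (h i hi).2⟩

lemma le_biSup_of_forall_le {i : ι} (hc : ∀ j ∈ s, f j ≤ c) (hi : i ∈ s) :
    f i ≤ ⨆ j ∈ s, f j := by
  have hbdd : BddAbove (range fun j => ⨆ _ : j ∈ s, f j) :=
    ⟨max c 0, forall_mem_range.2 fun j =>
      Real.iSup_le (fun hj => (hc j hj).trans (le_max_left _ _)) (le_max_right _ _)⟩
  simpa [hi] using le_ciSup hbdd i

lemma le_biSup_of_mem_unitInterval {i : ι} (h : ∀ j ∈ s, f j ∈ Icc (0 : ℝ) 1) (hi : i ∈ s) :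
    f i ≤ ⨆ j ∈ s, f j :=
  le_biSup_of_forall_le (fun j hj => (h j hj).2) hi

lemma exists_lt_of_lt_biSup (hc : 0 ≤ c) (h : c < ⨆ i ∈ s, f i) : ∃ i ∈ s, c < f i := by
  contrapose! h
  exact biSup_le_of_nonneg hc h

lemma biSup_union_le (h : ∀ i ∈ s ∪ t, f i ∈ Icc (0 : ℝ) 1) :
    ⨆ i ∈ s ∪ t, f i ≤ max (⨆ i ∈ s, f i) (⨆ i ∈ t, f i) := by
  have hs := biSup_nonneg_of_forall fun i hi => (h i (mem_union_left t hi)).1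
  refine biSup_le_of_nonneg (hs.trans (le_max_left _ _)) fun i hi => hi.elim (fun hi => ?_)
    fun hi => ?_
  · exact le_max_of_le_left
      (le_biSup_of_mem_unitInterval (fun j hj => h j (mem_union_left t hj)) hi)
  · exact le_max_of_le_right
      (le_biSup_of_mem_unitInterval (fun j hj => h j (mem_union_right s hj)) hi)

end Supremum

/-! ### Deviability densities -/

namespace IsDeviabilityDensity

variable {E F : Type*} [TopologicalSpace E] {p : E → ℝ}

lemma nonneg (hp : IsDeviabilityDensity p) (x : E) : 0 ≤ p x :=
  (hp.1 x).1

lemma le_one (hp : IsDeviabilityDensity p) (x : E) : p x ≤ 1 :=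
  (hp.1 x).2

lemma isCompact_le (hp : IsDeviabilityDensity p) {γ : ℝ} (hγ : 0 < γ) :
    IsCompact {x | γ ≤ p x} := by
  rcases le_or_gt γ 1 with h | h
  · exact hp.2.2 γ ⟨hγ, h⟩
  · have hempty : {x | γ ≤ p x} = ∅ :=
      eq_empty_of_forall_notMem fun x hx => (h.trans_le hx).not_ge (hp.le_one x)
    exact hempty ▸ isCompact_empty

lemma upperSemicontinuous [T2Space E] (hp : IsDeviabilityDensity p) :
    UpperSemicontinuous p := by
  refine upperSemicontinuous_iff_isClosed_preimage.2 fun γ => ?_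
  rcases lt_or_ge 0 γ with h | h
  · exact (hp.isCompact_le h).isClosed
  · have huniv : p ⁻¹' Ici γ = univ := eq_univ_of_forall fun x => h.trans (hp.nonneg x)
    exact huniv ▸ isClosed_univ

lemma exists_eq_biSup [T2Space E] (hp : IsDeviabilityDensity p) {s : Set E} (hs : IsClosed s)
    (h : 0 < ⨆ x ∈ s, p x) : ∃ x ∈ s, p x = ⨆ x ∈ s, p x := by
  obtain ⟨γ, hγ, hγs⟩ := exists_between h
  obtain ⟨y, hys, hy⟩ := exists_lt_of_lt_biSup hγ.le hγs
  obtain ⟨x, ⟨hx, hxs⟩, hmax⟩ := UpperSemicontinuousOn.exists_isMaxOn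
    (s := {x | γ ≤ p x} ∩ s) ⟨y, hy.le, hys⟩ ((hp.isCompact_le hγ).inter_right hs)
    (hp.upperSemicontinuous.upperSemicontinuousOn _)
  refine ⟨x, hxs, le_antisymm (le_biSup_of_mem_unitInterval (fun z _ => hp.1 z) hxs) ?_⟩
  refine biSup_le_of_nonneg (hp.nonneg x) fun z hz => ?_
  rcases le_or_gt γ (p z) with hzγ | hzγ
  · exact hmax ⟨hzγ, hz⟩
  · exact hzγ.le.trans hx

lemma map [T2Space E] [TopologicalSpace F] [T1Space F] (hp : IsDeviabilityDensity p) {f : E → F}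
    (hf : Continuous f) : IsDeviabilityDensity fun y => ⨆ x ∈ {x | f x = y}, p x := by
  have hmem (y : F) : ⨆ x ∈ {x | f x = y}, p x ∈ Icc (0 : ℝ) 1 :=
    biSup_mem_unitInterval fun x _ => hp.1 x
  have hle (x : E) : p x ≤ ⨆ z ∈ {z | f z = f x}, p z :=
    le_biSup_of_mem_unitInterval (fun z _ => hp.1 z) rfl
  refine ⟨hmem, le_antisymm (Real.iSup_le (fun y => (hmem y).2) zero_le_one) ?_, fun γ hγ => ?_⟩
  · have hbdd : BddAbove (range fun y => ⨆ x ∈ {x | f x = y}, p x) :=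
      ⟨1, forall_mem_range.2 fun y => (hmem y).2⟩
    rw [← hp.2.1]
    exact Real.iSup_le (fun x => (hle x).trans (le_ciSup hbdd (f x)))
      (Real.iSup_nonneg fun y => (hmem y).1)
  · have himage : {y | γ ≤ ⨆ x ∈ {x | f x = y}, p x} = f '' {x | γ ≤ p x} := by
      refine Subset.antisymm (fun y hy => ?_) (image_subset_iff.2 fun x hx => ?_)
      · obtain ⟨x, hxy, hx⟩ :=
          hp.exists_eq_biSup (isClosed_singleton.preimage hf) (hγ.1.trans_le hy)
        exact ⟨x, hy.trans_eq hx.symm, hxy⟩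
      · exact le_trans hx (hle x)
    exact himage ▸ (hp.isCompact_le hγ.1).image hf

end IsDeviabilityDensity

/-! ### Exponential growth rates -/

section LargeDeviations

open ProbabilityTheory
open scoped ENNReal

section Growth

/-- Exponential upper bound `limsup (J k) ^ (1 / r k) ≤ c`, stated without taking roots in
`ℝ≥0∞`. -/
def GrowthLE (r : ℕ → ℕ) (J : ℕ → ℝ≥0∞) (c : ℝ) : Prop :=
  ∀ θ > c, ∀ᶠ k in atTop, J k ≤ ENNReal.ofReal θ ^ r k

/-- Exponential lower bound `c ≤ liminf (J k) ^ (1 / r k)`, stated without taking roots in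
`ℝ≥0∞`. Only `θ ≥ 0` is tested, so that a negative `c` gives no condition. -/
def GrowthGE (r : ℕ → ℕ) (J : ℕ → ℝ≥0∞) (c : ℝ) : Prop :=
  ∀ θ, 0 ≤ θ → θ < c → ∀ᶠ k in atTop, ENNReal.ofReal θ ^ r k ≤ J k

variable {r : ℕ → ℕ} {I J : ℕ → ℝ≥0∞} {a b c : ℝ}

lemma GrowthLE.mono (hJ : GrowthLE r J c) (h : ∀ᶠ k in atTop, I k ≤ J k) : GrowthLE r I c := by
  intro θ hθ
  filter_upwards [hJ θ hθ, h] with k hk hIJ using hIJ.trans hk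

lemma growthLE_of_forall_gt (h : ∀ θ > c, GrowthLE r J θ) : GrowthLE r J c := by
  intro θ hθ
  obtain ⟨θ', hcθ', hθ'⟩ := exists_between hθ
  exact h θ' hcθ' θ hθ'

lemma GrowthGE.mono (hI : GrowthGE r I c) (h : ∀ᶠ k in atTop, I k ≤ J k) : GrowthGE r J c := by
  intro θ h0 hθ
  filter_upwards [hI θ h0 hθ, h] with k hk hIJ using hk.trans hIJ

lemma eventually_natCast_mul_pow_le (m : ℕ) {θ θ' : ℝ} (hr : Tendsto r atTop atTop) (h0 : 0 < θ)
    (hθ : θ < θ') : ∀ᶠ k in atTop, m * ENNReal.ofReal θ ^ r k ≤ ENNReal.ofReal θ' ^ r k := by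
  have hratio : Tendsto (fun k => (θ' / θ) ^ r k) atTop atTop :=
    (tendsto_pow_atTop_atTop_of_one_lt ((one_lt_div h0).2 hθ)).comp hr
  filter_upwards [hratio.eventually_ge_atTop (m : ℝ)] with k hk
  rw [div_pow, le_div_iff₀ (pow_pos h0 _)] at hk
  rw [← ENNReal.ofReal_pow h0.le, ← ENNReal.ofReal_pow (h0.trans hθ).le, ← ENNReal.ofReal_natCast,
    ← ENNReal.ofReal_mul m.cast_nonneg]
  exact ENNReal.ofReal_le_ofReal hk

lemma GrowthLE.add (hI : GrowthLE r I c) (hJ : GrowthLE r J c) (hr : Tendsto r atTop atTop)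
    (hc : 0 ≤ c) : GrowthLE r (fun k => I k + J k) c := by
  intro θ hθ
  obtain ⟨θ', hcθ', hθ'⟩ := exists_between hθ
  filter_upwards [hI θ' hcθ', hJ θ' hcθ',
    eventually_natCast_mul_pow_le 2 hr (hc.trans_lt hcθ') hθ'] with k hIk hJk hk
  calc I k + J k ≤ ENNReal.ofReal θ' ^ r k + ENNReal.ofReal θ' ^ r k := add_le_add hIk hJk
    _ = (2 : ℕ) * ENNReal.ofReal θ' ^ r k := by rw [Nat.cast_ofNat, two_mul]
    _ ≤ ENNReal.ofReal θ ^ r k := hk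

lemma GrowthGE.le_of_growthLE (hge : GrowthGE r J a) (hle : GrowthLE r J b)
    (hr : Tendsto r atTop atTop) (hb : 0 ≤ b) : a ≤ b := by
  by_contra! hlt
  obtain ⟨θ, hbθ, hθa⟩ := exists_between hlt
  obtain ⟨θ', hbθ', hθ'⟩ := exists_between hbθ
  obtain ⟨k, hk, hk', hr0⟩ := ((hle θ' hbθ').and
    ((hge θ (hb.trans hbθ.le) hθa).and (hr.eventually_ne_atTop 0))).exists
  exact (hk'.trans hk).not_gt
    (ENNReal.pow_lt_pow_left hr0 ((ENNReal.ofReal_lt_ofReal_iff (hb.trans_lt hbθ)).2 hθ'))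

lemma rpow_inv_natCast_le_iff {I θ : ℝ} {n : ℕ} (hI : 0 ≤ I) (hθ : 0 ≤ θ) (hn : n ≠ 0) :
    I ^ (n : ℝ)⁻¹ ≤ θ ↔ ENNReal.ofReal I ≤ ENNReal.ofReal θ ^ n := by
  rw [← ENNReal.ofReal_pow hθ, ENNReal.ofReal_le_ofReal_iff (pow_nonneg hθ n),
    Real.rpow_inv_le_iff_of_pos hI hθ (by positivity), Real.rpow_natCast]

lemma le_rpow_inv_natCast_iff {I θ : ℝ} {n : ℕ} (hI : 0 ≤ I) (hθ : 0 ≤ θ) (hn : n ≠ 0) :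
    θ ≤ I ^ (n : ℝ)⁻¹ ↔ ENNReal.ofReal θ ^ n ≤ ENNReal.ofReal I := by
  rw [← ENNReal.ofReal_pow hθ, ENNReal.ofReal_le_ofReal_iff hI,
    Real.le_rpow_inv_iff_of_pos hθ hI (by positivity), Real.rpow_natCast]

lemma growthLE_ofReal_of_tendsto {I : ℕ → ℝ} (hI : ∀ k, 0 ≤ I k) (hr : Tendsto r atTop atTop)
    (hc : 0 ≤ c) (h : Tendsto (fun k => I k ^ (r k : ℝ)⁻¹) atTop (𝓝 c)) :
    GrowthLE r (fun k => ENNReal.ofReal (I k)) c := by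
  intro θ hθ
  filter_upwards [h.eventually_le_const hθ, hr.eventually_ne_atTop 0] with k hk hr0
  exact (rpow_inv_natCast_le_iff (hI k) (hc.trans hθ.le) hr0).1 hk

lemma growthGE_ofReal_of_tendsto {I : ℕ → ℝ} (hI : ∀ k, 0 ≤ I k) (hr : Tendsto r atTop atTop)
    (h : Tendsto (fun k => I k ^ (r k : ℝ)⁻¹) atTop (𝓝 c)) :
    GrowthGE r (fun k => ENNReal.ofReal (I k)) c := by
  intro θ h0 hθ
  filter_upwards [h.eventually_const_le hθ, hr.eventually_ne_atTop 0] with k hk hr0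
  exact (le_rpow_inv_natCast_iff (hI k) h0 hr0).1 hk

end Growth

/-! ### Large deviation bounds -/

namespace LDConv

variable {E : Type*} [TopologicalSpace E] [MeasurableSpace E] [OpensMeasurableSpace E]
  {Q : ℕ → Measure E} [∀ k, IsFiniteMeasure (Q k)] {r : ℕ → ℕ} {p : E → ℝ}

lemma ofReal_integral_pow (k : ℕ) {f : E → ℝ} (hf : Continuous f)
    (hf01 : ∀ x, f x ∈ Icc (0 : ℝ) 1) :
    ENNReal.ofReal (∫ x, f x ^ r k ∂Q k) = ∫⁻ x, ENNReal.ofReal (f x) ^ r k ∂Q k := by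
  have hpow (x : E) : 0 ≤ f x ^ r k := pow_nonneg (hf01 x).1 _
  simp only [← ENNReal.ofReal_pow (hf01 _).1]
  refine ofReal_integral_eq_lintegral_ofReal (Integrable.of_bound
    (hf.pow _).measurable.aestronglyMeasurable 1 (Eventually.of_forall fun x => ?_))
    (Eventually.of_forall hpow)
  rw [Real.norm_of_nonneg (hpow x)]
  exact pow_le_one₀ (hf01 x).1 (hf01 x).2

lemma growthLE_lintegral (h : LDConv Q r p) (hr : Tendsto r atTop atTop) {f : E → ℝ}
    (hf : Continuous f) (hf01 : ∀ x, f x ∈ Icc (0 : ℝ) 1) (hsup : 0 ≤ ⨆ x, f x * p x) :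
    GrowthLE r (fun k => ∫⁻ x, ENNReal.ofReal (f x) ^ r k ∂Q k) (⨆ x, f x * p x) := by
  simp only [← ofReal_integral_pow _ hf hf01]
  exact growthLE_ofReal_of_tendsto (fun k => integral_nonneg fun x => pow_nonneg (hf01 x).1 _) hr
    hsup (h f hf (fun x => (hf01 x).1) ⟨1, forall_mem_range.2 fun x => (hf01 x).2⟩)

lemma growthGE_lintegral (h : LDConv Q r p) (hr : Tendsto r atTop atTop) {f : E → ℝ}
    (hf : Continuous f) (hf01 : ∀ x, f x ∈ Icc (0 : ℝ) 1) :
    GrowthGE r (fun k => ∫⁻ x, ENNReal.ofReal (f x) ^ r k ∂Q k) (⨆ x, f x * p x) := by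
  simp only [← ofReal_integral_pow _ hf hf01]
  exact growthGE_ofReal_of_tendsto (fun k => integral_nonneg fun x => pow_nonneg (hf01 x).1 _) hr
    (h f hf (fun x => (hf01 x).1) ⟨1, forall_mem_range.2 fun x => (hf01 x).2⟩)

variable [T2Space E] [NormalSpace E]

lemma growthLE_measure (h : LDConv Q r p) (hp : IsDeviabilityDensity p)
    (hr : Tendsto r atTop atTop) {C : Set E} (hC : IsClosed C) {c : ℝ} (hc : 0 ≤ c)
    (hpc : ∀ x ∈ C, p x ≤ c) : GrowthLE r (fun k => Q k C) c := by
  intro θ hθ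
  obtain ⟨γ, hcγ, hγθ⟩ := exists_between hθ
  have hγ : 0 < γ := hc.trans_lt hcγ
  have hdisj : Disjoint {x | γ ≤ p x} C :=
    disjoint_left.2 fun x hx hxC => (hcγ.trans_le hx).not_ge (hpc x hxC)
  obtain ⟨f, hf0, hf1, hf01⟩ :=
    exists_continuous_zero_one_of_isClosed (hp.isCompact_le hγ).isClosed hC hdisj
  have hsup : ⨆ x, f x * p x ≤ γ := by
    refine Real.iSup_le (fun x => ?_) hγ.le
    rcases le_or_gt γ (p x) with hx | hx
    · simpa [hf0 hx] using hγ.le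
    · exact (mul_le_of_le_one_left (hp.nonneg x) (hf01 x).2).trans hx.le
  refine ((h.growthLE_lintegral hr f.continuous hf01 (Real.iSup_nonneg fun x =>
    mul_nonneg (hf01 x).1 (hp.nonneg x))).mono (Eventually.of_forall fun k => ?_)) θ
    (hsup.trans_lt hγθ)
  rw [← lintegral_indicator_one hC.measurableSet]
  refine lintegral_mono fun x => ?_
  by_cases hx : x ∈ C <;> simp [hx, hf1 _]

lemma growthGE_measure (h : LDConv Q r p) (hp : IsDeviabilityDensity p)
    (hr : Tendsto r atTop atTop) {V : Set E} (hV : IsOpen V) {y : E} (hy : y ∈ V) :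
    GrowthGE r (fun k => Q k V) (p y) := by
  intro θ h0 hθ
  obtain ⟨f, hf0, hf1, hf01⟩ := exists_continuous_zero_one_of_isClosed hV.isClosed_compl
    (isClosed_singleton (x := y)) (by simpa using hy)
  have hbdd : BddAbove (range fun x => f x * p x) :=
    ⟨1, forall_mem_range.2 fun x => mul_le_one₀ (hf01 x).2 (hp.nonneg x) (hp.le_one x)⟩
  have hsup : p y ≤ ⨆ x, f x * p x := by simpa [hf1 rfl] using le_ciSup hbdd y
  refine ((h.growthGE_lintegral hr f.continuous hf01).mono ?_) θ h0 (hθ.trans_le hsup)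
  filter_upwards [hr.eventually_ne_atTop 0] with k hk
  rw [← lintegral_indicator_one hV.measurableSet]
  refine lintegral_mono fun x => ?_
  by_cases hx : x ∈ V
  · simpa [hx] using pow_le_one₀ zero_le (ENNReal.ofReal_le_one.2 (hf01 x).2)
  · simp [hx, hf0 (mem_compl hx), hk]

end LDConv

section SequentialLimits

variable {E : Type*} [TopologicalSpace E] {x : E}

lemma exists_tendsto_comp_eq {φ : ℕ → ℕ} (hφ : StrictMono φ) {ys : ℕ → E}
    (hys : Tendsto ys atTop (𝓝 x)) :
    ∃ xs : ℕ → E, Tendsto xs atTop (𝓝 x) ∧ ∀ k, xs (φ k) = ys k := by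
  have hext (k : ℕ) : Function.extend φ ys (fun _ => x) (φ k) = ys k :=
    hφ.injective.extend_apply _ _ _
  refine ⟨Function.extend φ ys fun _ => x, tendsto_def.2 fun W hW => ?_, hext⟩
  obtain ⟨N, hN⟩ := eventually_atTop.1 (hys.eventually_mem hW)
  filter_upwards [eventually_ge_atTop (φ N)] with n hn
  by_cases hrange : ∃ k, φ k = n
  · obtain ⟨k, rfl⟩ := hrange
    exact mem_preimage.2 ((hext k).symm ▸ hN k (hφ.le_iff_le.1 hn))
  · rw [mem_preimage, Function.extend_apply' _ _ _ hrange]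
    exact mem_of_mem_nhds hW

lemma eventually_atTop_prod_nhds_of_forall_seq [FirstCountableTopology E] {R : ℕ → E → Prop}
    (h : ∀ xs : ℕ → E, Tendsto xs atTop (𝓝 x) → ∀ᶠ n in atTop, R n (xs n)) :
    ∀ᶠ q in atTop ×ˢ 𝓝 x, R q.1 q.2 := by
  by_contra hfreq
  obtain ⟨q, hq, hR⟩ := exists_seq_forall_of_frequently (not_eventually.1 hfreq)
  obtain ⟨ψ, hψ, hmono⟩ := strictMono_subseq_of_tendsto_atTop (tendsto_fst.comp hq)
  obtain ⟨xs, hxs, hxsq⟩ :=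
    exists_tendsto_comp_eq hmono ((tendsto_snd.comp hq).comp hψ.tendsto_atTop)
  obtain ⟨k, hk⟩ := (hmono.tendsto_atTop.eventually (h xs hxs)).exists
  rw [hxsq k] at hk
  exact hR (ψ k) hk

end SequentialLimits

/-- LD convergence at rate `r` of kernels `η k` to the densities `p x`, locally uniformly in the
starting point: it holds along every convergent sequence of starting points. -/
def LDConvKernel {E : Type*} [TopologicalSpace E] [MeasurableSpace E]
    (η : ℕ → Kernel E E) (r : ℕ → ℕ) (p : E → E → ℝ) : Prop :=
  ∀ (x : E) (xs : ℕ → E), Tendsto xs atTop (𝓝 x) → LDConv (fun k => η k (xs k)) r (p x)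

namespace LDConvKernel

variable {E : Type*} [MetricSpace E] [MeasurableSpace E]
  {η : ℕ → Kernel E E} {r : ℕ → ℕ} {p : E → E → ℝ}

lemma comp_strictMono (h : LDConvKernel η r p) {φ : ℕ → ℕ} (hφ : StrictMono φ) :
    LDConvKernel (η ∘ φ) (r ∘ φ) p := by
  intro x ys hys f hf hf0 hfb
  obtain ⟨xs, hxs, hxsys⟩ := exists_tendsto_comp_eq hφ hys
  refine ((h x xs hxs f hf hf0 hfb).comp hφ.tendsto_atTop).congr fun k => ?_
  simp only [Function.comp_apply, hxsys]

variable [BorelSpace E] [∀ k, IsMarkovKernel (η k)]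

lemma eventually_apply_le (h : LDConvKernel η r p) (hp : ∀ x, IsDeviabilityDensity (p x))
    (hr : Tendsto r atTop atTop) {C : Set E} (hC : IsClosed C) (x : E) {θ : ℝ}
    (hθ : ⨆ y ∈ C, p x y < θ) :
    ∀ᶠ q in atTop ×ˢ 𝓝 x, η q.1 q.2 C ≤ ENNReal.ofReal θ ^ r q.1 :=
  eventually_atTop_prod_nhds_of_forall_seq (R := fun k z => η k z C ≤ _) fun xs hxs =>
    (h x xs hxs).growthLE_measure (hp x) hr hC (biSup_nonneg_of_forall fun y _ => (hp x).nonneg y)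
      (fun _ => le_biSup_of_mem_unitInterval fun y _ => (hp x).1 y) θ hθ

lemma eventually_le_apply (h : LDConvKernel η r p) (hp : ∀ x, IsDeviabilityDensity (p x))
    (hr : Tendsto r atTop atTop) {V : Set E} (hV : IsOpen V) (x : E) {y : E} (hy : y ∈ V) {θ : ℝ}
    (h0 : 0 ≤ θ) (hθ : θ < p x y) :
    ∀ᶠ q in atTop ×ˢ 𝓝 x, ENNReal.ofReal θ ^ r q.1 ≤ η q.1 q.2 V :=
  eventually_atTop_prod_nhds_of_forall_seq (R := fun k z => _ ≤ η k z V) fun xs hxs =>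
    (h x xs hxs).growthGE_measure (hp x) hr hV hy θ h0 hθ

end LDConvKernel

section ProductMeasure

variable {E F : Type*} [MeasurableSpace E] [MeasurableSpace F]

lemma compProd_prod_le_mul {μ : Measure E} [SFinite μ] {κ : Kernel E F}
    [IsSFiniteKernel κ] {U : Set E} {V : Set F} {c : ℝ≥0∞} (hU : MeasurableSet U)
    (hV : MeasurableSet V) (h : ∀ x ∈ U, κ x V ≤ c) : (μ ⊗ₘ κ) (U ×ˢ V) ≤ c * μ U := by
  rw [Measure.compProd_apply_prod hU hV, ← setLIntegral_const]
  exact setLIntegral_mono measurable_const h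

lemma mul_le_compProd_prod {μ : Measure E} [SFinite μ] {κ : Kernel E F}
    [IsSFiniteKernel κ] {U : Set E} {V : Set F} {c : ℝ≥0∞} (hU : MeasurableSet U)
    (hV : MeasurableSet V) (h : ∀ x ∈ U, c ≤ κ x V) : c * μ U ≤ (μ ⊗ₘ κ) (U ×ˢ V) := by
  rw [Measure.compProd_apply_prod hU hV, ← setLIntegral_const]
  exact setLIntegral_mono (κ.measurable_coe hV) h

lemma measure_compl_prod_eq_of_fst_eq_snd {m : Measure (E × E)} [IsFiniteMeasure m]
    (h : m.fst = m.snd) {D : Set E} (hD : MeasurableSet D) : m (Dᶜ ×ˢ D) = m (D ×ˢ Dᶜ) := by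
  have hrow : m (D ×ˢ D) + m (D ×ˢ Dᶜ) = m.fst D := by
    rw [Measure.fst_apply hD, ← prod_univ, ← union_compl_self D, prod_union,
      measure_union (disjoint_compl_right.set_prod_right _ _) (hD.prod hD.compl)]
  have hcol : m (D ×ˢ D) + m (Dᶜ ×ˢ D) = m.snd D := by
    rw [Measure.snd_apply hD, ← univ_prod, ← union_compl_self D, union_prod,
      measure_union (disjoint_compl_right.set_prod_left _ _) (hD.compl.prod hD)]
  exact (ENNReal.add_right_inj (measure_ne_top m _)).1 (hcol.trans (h ▸ hrow.symm))

end ProductMeasure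

/-- Stationary Markov chains on `E` with transition kernels `η k` and invariant laws `μ k`, obeying
at rate `r` the large deviation principles with densities `p x` (kernels) and `ρ` (laws). -/
structure StationaryLDConv {E : Type*} [TopologicalSpace E] [MeasurableSpace E]
    (η : ℕ → Kernel E E) (μ : ℕ → Measure E) (r : ℕ → ℕ) (p : E → E → ℝ) (ρ : E → ℝ) : Prop where
  isMarkovKernel : ∀ k, IsMarkovKernel (η k)
  isProbabilityMeasure : ∀ k, IsProbabilityMeasure (μ k)
  invariant : ∀ k, (η k).Invariant (μ k)
  tendsto_rate : Tendsto r atTop atTop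
  kernel_density : ∀ x, IsDeviabilityDensity (p x)
  measure_density : IsDeviabilityDensity ρ
  ldConvKernel : LDConvKernel η r p
  ldConv : LDConv μ r ρ

namespace StationaryLDConv

section Topological

variable {E : Type*} [TopologicalSpace E] [MeasurableSpace E] {η : ℕ → Kernel E E}
  {μ : ℕ → Measure E} {r : ℕ → ℕ} {p : E → E → ℝ} {ρ : E → ℝ}

lemma fst_eq_snd (h : StationaryLDConv η μ r p ρ) (k : ℕ) :
    (μ k ⊗ₘ η k).fst = (μ k ⊗ₘ η k).snd := by
  have := h.isMarkovKernel
  have := h.isProbabilityMeasure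
  rw [Measure.fst_compProd, Measure.snd_compProd, (h.invariant k).def]

lemma univ_prod_apply (h : StationaryLDConv η μ r p ρ) (k : ℕ) {V : Set E}
    (hV : MeasurableSet V) : (μ k ⊗ₘ η k) (univ ×ˢ V) = μ k V := by
  have := h.isMarkovKernel
  have := h.isProbabilityMeasure
  rw [univ_prod, ← Measure.snd_apply hV, ← h.fst_eq_snd, Measure.fst_compProd]

end Topological

variable {E : Type*} [MetricSpace E] [MeasurableSpace E] {η : ℕ → Kernel E E}
  {μ : ℕ → Measure E} {r : ℕ → ℕ} {p : E → E → ℝ} {ρ : E → ℝ}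

lemma of_strictMono {φ : ℕ → ℕ} (hφ : StrictMono φ) (hη : ∀ n, IsMarkovKernel (η n))
    (hμ : ∀ n, IsProbabilityMeasure (μ n))
    (hinv : ∀ n Γ, MeasurableSet Γ → μ n Γ = ∫⁻ x, η n x Γ ∂(μ n))
    (hp : ∀ x, IsDeviabilityDensity (p x)) (hρ : IsDeviabilityDensity ρ)
    (hηp : LDConvKernel η id p) (hμρ : LDConv (μ ∘ φ) φ ρ) :
    StationaryLDConv (η ∘ φ) (μ ∘ φ) φ p ρ where
  isMarkovKernel k := hη (φ k)
  isProbabilityMeasure k := hμ (φ k)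
  invariant k := Measure.ext fun Γ hΓ => by
    rw [Function.comp_apply, Function.comp_apply, Measure.bind_apply hΓ (η (φ k)).aemeasurable]
    exact (hinv (φ k) Γ hΓ).symm
  tendsto_rate := hφ.tendsto_atTop
  kernel_density := hp
  measure_density := hρ
  ldConvKernel := hηp.comp_strictMono hφ
  ldConv := hμρ

variable [BorelSpace E]

lemma growthGE_prod (h : StationaryLDConv η μ r p ρ) {U V : Set E} (hU : IsOpen U) (hV : IsOpen V)
    {x y : E} (hx : x ∈ U) (hy : y ∈ V) :
    GrowthGE r (fun k => (μ k ⊗ₘ η k) (U ×ˢ V)) (ρ x * p x y) := by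
  have := h.isMarkovKernel
  have := h.isProbabilityMeasure
  intro θ h0 hθ
  obtain ⟨a, ha, haρ, b, hb, hbp, hθab⟩ :
      ∃ a, 0 ≤ a ∧ a < ρ x ∧ ∃ b, 0 ≤ b ∧ b < p x y ∧ θ < a * b := by
    contrapose! hθ
    exact mul_le_of_forall_lt_of_nonneg (h.measure_density.nonneg x) h0 hθ
  obtain ⟨N, hN, O, hO, hNO⟩ := eventually_prod_iff.1
    (h.ldConvKernel.eventually_le_apply h.kernel_density h.tendsto_rate hV x hy hb hbp)
  obtain ⟨W, hWO, hW, hxW⟩ := _root_.mem_nhds_iff.1 (inter_mem hO (hU.mem_nhds hx))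
  filter_upwards [hN, h.ldConv.growthGE_measure h.measure_density h.tendsto_rate hW hxW a ha haρ]
    with k hk hμ
  calc ENNReal.ofReal θ ^ r k ≤ (ENNReal.ofReal b * ENNReal.ofReal a) ^ r k := by
        rw [← ENNReal.ofReal_mul hb, mul_comm b a]
        gcongr
    _ = ENNReal.ofReal b ^ r k * ENNReal.ofReal a ^ r k := mul_pow _ _ _
    _ ≤ ENNReal.ofReal b ^ r k * μ k W := by gcongr
    _ ≤ (μ k ⊗ₘ η k) (W ×ˢ V) :=
        mul_le_compProd_prod hW.measurableSet hV.measurableSet fun z hz => hNO hk (hWO hz).1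
    _ ≤ (μ k ⊗ₘ η k) (U ×ˢ V) := measure_mono (prod_mono_left fun z hz => (hWO hz).2)

lemma exists_nhds_growthLE_prod (h : StationaryLDConv η μ r p ρ) {C : Set E} (hC : IsClosed C)
    {x : E} {c θ : ℝ} (hc : 0 ≤ c) (hθ : c < θ) (hb : ∀ y ∈ C, ρ x * p x y ≤ c) :
    ∃ W ∈ 𝓝 x, GrowthLE r (fun k => (μ k ⊗ₘ η k) (W ×ˢ C)) θ := by
  have := h.isMarkovKernel
  have := h.isProbabilityMeasure
  have hsup : ρ x * ⨆ y ∈ C, p x y ≤ c := by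
    simp only [Real.mul_iSup_of_nonneg (h.measure_density.nonneg x)]
    exact biSup_le_of_nonneg hc hb
  obtain ⟨a, ha, b, hb, hab⟩ : ∃ a > ρ x, ∃ b > ⨆ y ∈ C, p x y, a * b < θ := by
    contrapose! hθ
    exact (le_mul_of_forall_lt₀ hθ).trans hsup
  have hb0 : 0 ≤ b := (biSup_nonneg_of_forall fun y _ => (h.kernel_density x).nonneg y).trans hb.le
  obtain ⟨a', hρa', ha'⟩ := exists_between ha
  have ha'0 : 0 ≤ a' := (h.measure_density.nonneg x).trans hρa'.le
  obtain ⟨N, hN, O, hO, hNO⟩ := eventually_prod_iff.1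
    (h.ldConvKernel.eventually_apply_le h.kernel_density h.tendsto_rate hC x hb)
  obtain ⟨W, hW, hWcl, hWO⟩ := exists_mem_nhds_isClosed_subset
    (inter_mem hO (h.measure_density.upperSemicontinuous x a' hρa'))
  refine ⟨W, hW, fun θ' hθ' => ?_⟩
  filter_upwards [hN, h.ldConv.growthLE_measure h.measure_density h.tendsto_rate hWcl ha'0
    (fun z hz => (hWO hz).2.le) a ha'] with k hk hμ
  calc (μ k ⊗ₘ η k) (W ×ˢ C) ≤ ENNReal.ofReal b ^ r k * μ k W :=
        compProd_prod_le_mul hWcl.measurableSet hC.measurableSet fun z hz => hNO hk (hWO hz).1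
    _ ≤ ENNReal.ofReal b ^ r k * ENNReal.ofReal a ^ r k := by gcongr
    _ = (ENNReal.ofReal b * ENNReal.ofReal a) ^ r k := (mul_pow _ _ _).symm
    _ ≤ ENNReal.ofReal θ' ^ r k := by
        rw [← ENNReal.ofReal_mul hb0, mul_comm b a]
        gcongr
        exact hab.le.trans (le_of_lt hθ')

lemma exists_isOpen_growthLE_prod (h : StationaryLDConv η μ r p ρ) {K C : Set E} (hK : IsCompact K)
    (hC : IsClosed C) {c θ : ℝ} (hc : 0 ≤ c) (hθ : c < θ)
    (hb : ∀ x ∈ K, ∀ y ∈ C, ρ x * p x y ≤ c) :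
    ∃ U, IsOpen U ∧ K ⊆ U ∧ GrowthLE r (fun k => (μ k ⊗ₘ η k) (U ×ˢ C)) θ := by
  refine hK.induction_on ⟨∅, isOpen_empty, subset_rfl, fun θ' _ => by simp⟩
    (fun s t hst ⟨U, hU, htU, hg⟩ => ⟨U, hU, hst.trans htU, hg⟩)
    (fun s t ⟨U, hU, hsU, hg⟩ ⟨V, hV, htV, hg'⟩ => ?_) fun x hx => ?_
  · refine ⟨U ∪ V, hU.union hV, union_subset_union hsU htV,
      (hg.add hg' h.tendsto_rate (hc.trans hθ.le)).mono (Eventually.of_forall fun k => ?_)⟩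
    rw [union_prod]
    exact measure_union_le _ _
  · obtain ⟨W, hW, hg⟩ := h.exists_nhds_growthLE_prod hC hc hθ (hb x hx)
    exact ⟨interior W, mem_nhdsWithin_of_mem_nhds (interior_mem_nhds.2 hW), interior W,
      isOpen_interior, subset_rfl, hg.mono (Eventually.of_forall fun k =>
        measure_mono (prod_mono_left interior_subset))⟩

lemma growthLE_prod (h : StationaryLDConv η μ r p ρ) {D C : Set E} (hD : IsClosed D)
    (hC : IsClosed C) {c : ℝ} (hc : 0 ≤ c) (hb : ∀ x ∈ D, ∀ y ∈ C, ρ x * p x y ≤ c) :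
    GrowthLE r (fun k => (μ k ⊗ₘ η k) (D ×ˢ C)) c := by
  have := h.isMarkovKernel
  have := h.isProbabilityMeasure
  refine growthLE_of_forall_gt fun θ hθ => ?_
  have hθ0 : 0 < θ := hc.trans_lt hθ
  obtain ⟨U, hU, hDU, hgrowth⟩ := h.exists_isOpen_growthLE_prod
    ((h.measure_density.isCompact_le hθ0).inter_right hD) hC hc hθ fun x hx => hb x hx.2
  have hrest : GrowthLE r (fun k => μ k (D \ U)) θ :=
    h.ldConv.growthLE_measure h.measure_density h.tendsto_rate (hD.sdiff hU) hθ0.le fun x hx =>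
      (not_le.1 fun hρ => hx.2 (hDU ⟨hρ, hx.1⟩)).le
  refine (hgrowth.add hrest h.tendsto_rate hθ0.le).mono (Eventually.of_forall fun k => ?_)
  calc (μ k ⊗ₘ η k) (D ×ˢ C)
      ≤ (μ k ⊗ₘ η k) (U ×ˢ C ∪ (D \ U) ×ˢ C) := by
        rw [← union_prod, union_sdiff_self]
        exact measure_mono (prod_mono_left subset_union_right)
    _ ≤ (μ k ⊗ₘ η k) (U ×ˢ C) + (μ k ⊗ₘ η k) ((D \ U) ×ˢ C) := measure_union_le _ _
    _ ≤ (μ k ⊗ₘ η k) (U ×ˢ C) + μ k (D \ U) := by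
        gcongr
        simpa using compProd_prod_le_mul (hD.sdiff hU).measurableSet hC.measurableSet
          fun z _ => prob_le_one

lemma mul_le (h : StationaryLDConv η μ r p ρ) (x y : E) : ρ x * p x y ≤ ρ y := by
  have := h.isProbabilityMeasure
  by_contra! hlt
  obtain ⟨c, hyc, hc⟩ := exists_between hlt
  have hc0 : 0 ≤ c := (h.measure_density.nonneg y).trans hyc.le
  obtain ⟨V, hV, hVcl, hVc⟩ :=
    exists_mem_nhds_isClosed_subset (h.measure_density.upperSemicontinuous y c hyc)
  have hge := h.growthGE_prod isOpen_univ isOpen_interior (mem_univ x)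
    (mem_interior_iff_mem_nhds.2 hV)
  have hle := h.ldConv.growthLE_measure h.measure_density h.tendsto_rate hVcl hc0
    fun z hz => (hVc hz).le
  refine hc.not_ge ((hge.mono (Eventually.of_forall fun k => ?_)).le_of_growthLE hle
    h.tendsto_rate hc0)
  rw [h.univ_prod_apply k isOpen_interior.measurableSet]
  exact measure_mono interior_subset

lemma le_of_forall_mul_le (h : StationaryLDConv η μ r p ρ) {y : E} {V : Set E} (hV : V ∈ 𝓝 y)
    {c : ℝ} (hb : ∀ x, ∀ z ∈ V, ρ x * p x z ≤ c) : ρ y ≤ c := by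
  have := h.isProbabilityMeasure
  have hc : 0 ≤ c := (mul_nonneg (h.measure_density.nonneg y) ((h.kernel_density y).nonneg y)).trans
    (hb y y (mem_of_mem_nhds hV))
  obtain ⟨C, hC, hCcl, hCV⟩ := exists_mem_nhds_isClosed_subset hV
  have hge := h.ldConv.growthGE_measure h.measure_density h.tendsto_rate isOpen_interior
    (mem_interior_iff_mem_nhds.2 hC)
  have hle := h.growthLE_prod isClosed_univ hCcl hc fun x _ z hz => hb x z (hCV hz)
  refine (hge.mono (Eventually.of_forall fun k => ?_)).le_of_growthLE hle h.tendsto_rate hc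
  rw [h.univ_prod_apply k hCcl.measurableSet]
  exact measure_mono interior_subset

lemma mul_le_of_forall_reverse_mul_le (h : StationaryLDConv η μ r p ρ) {D U : Set E}
    (hD : IsClosed D) (hU : IsOpen U) (hUD : U ⊆ D) {c : ℝ} (hc : 0 ≤ c)
    (hb : ∀ x ∈ D, ∀ y ∉ U, ρ x * p x y ≤ c) {x y : E} (hx : x ∉ D) (hy : y ∈ U) :
    ρ x * p x y ≤ c := by
  have := h.isMarkovKernel
  have := h.isProbabilityMeasure
  have hge := h.growthGE_prod hD.isOpen_compl hU hx hy
  have hle := h.growthLE_prod hD hU.isClosed_compl hc hb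
  refine (hge.mono (Eventually.of_forall fun k => ?_)).le_of_growthLE hle h.tendsto_rate hc
  calc (μ k ⊗ₘ η k) (Dᶜ ×ˢ U) ≤ (μ k ⊗ₘ η k) (Dᶜ ×ˢ D) := measure_mono (prod_mono_right hUD)
    _ = (μ k ⊗ₘ η k) (D ×ˢ Dᶜ) :=
        measure_compl_prod_eq_of_fst_eq_snd (h.fst_eq_snd k) hD.measurableSet
    _ ≤ (μ k ⊗ₘ η k) (D ×ˢ Uᶜ) := measure_mono (prod_mono_right (compl_subset_compl.2 hUD))

end StationaryLDConv

end LargeDeviations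

/-! ### Paths and transition densities -/

/-- Path densities `Px x` of a maxitive Markov process: the part of `DevSetup` that concerns a
single starting point and the Markov property (2.3). -/
structure IsMaxitiveMarkov {E : Type*} [MetricSpace E] (Px : E → C(ℝ≥0, E) → ℝ) : Prop where
  dev : ∀ x, IsDeviabilityDensity (Px x)
  start : ∀ x (X : C(ℝ≥0, E)), X 0 ≠ x → Px x X = 0
  markov : ∀ x (X : C(ℝ≥0, E)) (s : ℝ≥0),
    Px x X = (⨆ X' ∈ {X' : C(ℝ≥0, E) | ∀ u ≤ s, X' u = X u}, Px x X') *
      Px (X s) (pshift s X)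

/-- The path that follows `X` up to time `s` and `Y` afterwards. -/
def pathConcat {E : Type*} [TopologicalSpace E] (s : ℝ≥0) (X Y : C(ℝ≥0, E)) (h : Y 0 = X s) :
    C(ℝ≥0, E) where
  toFun t := if t ≤ s then X t else Y (t - s)
  continuous_toFun := by
    refine X.continuous.if_le (Y.continuous.comp (continuous_id.sub continuous_const))
      continuous_id continuous_const fun t ht => ?_
    simp [ht, h]

lemma pathConcat_apply_of_le {E : Type*} [TopologicalSpace E] {s t : ℝ≥0} {X Y : C(ℝ≥0, E)}
    (h : Y 0 = X s) (ht : t ≤ s) : pathConcat s X Y h t = X t :=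
  if_pos ht

lemma pshift_pathConcat {E : Type*} [MetricSpace E] {s : ℝ≥0} {X Y : C(ℝ≥0, E)} (h : Y 0 = X s) :
    pshift s (pathConcat s X Y h) = Y := by
  ext u
  rcases eq_zero_or_pos u with rfl | hu
  · simp [pathConcat, pshift, h]
  · simp [pathConcat, pshift, hu.ne']

namespace IsMaxitiveMarkov

variable {E : Type*} [MetricSpace E] {Px : E → C(ℝ≥0, E) → ℝ}

lemma transDen_density (h : IsMaxitiveMarkov Px) (x : E) (t : ℝ≥0) :
    IsDeviabilityDensity (transDen Px x t) :=
  (h.dev x).map (continuous_eval_const t)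

lemma le_transDen (h : IsMaxitiveMarkov Px) (x : E) (t : ℝ≥0) (X : C(ℝ≥0, E)) :
    Px x X ≤ transDen Px x t (X t) :=
  le_biSup_of_mem_unitInterval (f := Px x) (s := {Y | Y t = X t}) (fun Y _ => (h.dev x).1 Y) rfl

lemma exists_eq_transDen (h : IsMaxitiveMarkov Px) {x y : E} {t : ℝ≥0}
    (hpos : 0 < transDen Px x t y) : ∃ X : C(ℝ≥0, E), X t = y ∧ Px x X = transDen Px x t y :=
  (h.dev x).exists_eq_biSup (isClosed_singleton.preimage (continuous_eval_const t)) hpos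

lemma le_transDen_mul_pshift (h : IsMaxitiveMarkov Px) (x : E) (s : ℝ≥0) (X : C(ℝ≥0, E)) :
    Px x X ≤ transDen Px x s (X s) * Px (X s) (pshift s X) := by
  rw [h.markov x X s]
  refine mul_le_mul_of_nonneg_right ?_ ((h.dev _).nonneg _)
  refine biSup_le_of_nonneg ((h.transDen_density x s).nonneg _) fun Y hY => ?_
  rw [← hY s le_rfl]
  exact h.le_transDen x s Y

lemma le_pshift (h : IsMaxitiveMarkov Px) (x : E) (s : ℝ≥0) (X : C(ℝ≥0, E)) :
    Px x X ≤ Px (X s) (pshift s X) :=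
  (h.le_transDen_mul_pshift x s X).trans
    (mul_le_of_le_one_left ((h.dev _).nonneg _) ((h.transDen_density x s).le_one _))

lemma le_transDen_mul_transDen (h : IsMaxitiveMarkov Px) (x : E) {s t : ℝ≥0} (hst : s ≤ t)
    (X : C(ℝ≥0, E)) :
    Px x X ≤ transDen Px x s (X s) * transDen Px (X s) (t - s) (X t) := by
  refine (h.le_transDen_mul_pshift x s X).trans
    (mul_le_mul_of_nonneg_left ?_ ((h.transDen_density x s).nonneg _))
  simpa [pshift, add_tsub_cancel_of_le hst] using h.le_transDen (X s) (t - s) (pshift s X)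

lemma mul_le_pathConcat (h : IsMaxitiveMarkov Px) (x : E) {s : ℝ≥0} {X Y : C(ℝ≥0, E)}
    (hXY : Y 0 = X s) : Px x X * Px (X s) Y ≤ Px x (pathConcat s X Y hXY) := by
  rw [h.markov x (pathConcat s X Y hXY) s, pshift_pathConcat, pathConcat_apply_of_le hXY le_rfl]
  refine mul_le_mul_of_nonneg_right ?_ ((h.dev _).nonneg _)
  exact le_biSup_of_mem_unitInterval (f := Px x) (fun Z _ => (h.dev x).1 Z)
    fun u hu => (pathConcat_apply_of_le hXY hu).symm

lemma transDen_mul_le (h : IsMaxitiveMarkov Px) (x y z : E) (s t : ℝ≥0) :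
    transDen Px x s y * transDen Px y t z ≤ transDen Px x (s + t) z := by
  have hnonneg := (h.transDen_density x (s + t)).nonneg z
  rw [transDen, transDen]
  simp only [Real.mul_iSup_of_nonneg (biSup_nonneg_of_forall fun X _ => (h.dev x).nonneg X)]
  refine biSup_le_of_nonneg hnonneg fun Y hY => ?_
  simp only [Real.iSup_mul_of_nonneg ((h.dev y).nonneg Y)]
  refine biSup_le_of_nonneg hnonneg fun X hX => ?_
  obtain rfl : X s = y := hX
  obtain rfl : Y t = z := hY
  by_cases hXY : Y 0 = X s
  · refine (h.mul_le_pathConcat x hXY).trans ((h.le_transDen x (s + t) _).trans_eq ?_)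
    exact congrArg (transDen Px x (s + t)) (DFunLike.congr_fun (pshift_pathConcat hXY) t)
  · simpa [h.start _ Y hXY] using hnonneg

end IsMaxitiveMarkov

/-- `PL x y` is the limit of the transition densities `Π_{x,t}(y)` as `t → ∞`. -/
def IsLongTimeLimit {E : Type*} [MetricSpace E] (Px : E → C(ℝ≥0, E) → ℝ) (PL : E → E → ℝ) : Prop :=
  ∀ x y, Tendsto (fun t : ℝ≥0 => transDen Px x t y) atTop (𝓝 (PL x y))

namespace IsLongTimeLimit

variable {E : Type*} [MetricSpace E] {Px : E → C(ℝ≥0, E) → ℝ} {PL : E → E → ℝ}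

lemma mem_unitInterval (hPL : IsLongTimeLimit Px PL) (h : IsMaxitiveMarkov Px) (x y : E) :
    PL x y ∈ Icc (0 : ℝ) 1 :=
  isClosed_Icc.mem_of_tendsto (hPL x y) (Eventually.of_forall fun t => (h.transDen_density x t).1 y)

lemma mul_transDen_le (hPL : IsLongTimeLimit Px PL) (h : IsMaxitiveMarkov Px) (x y z : E)
    (t : ℝ≥0) : PL x y * transDen Px y t z ≤ PL x z :=
  le_of_tendsto_of_tendsto' ((hPL x y).mul_const _)
    ((hPL x z).comp (tendsto_atTop_mono (fun _ => le_self_add) tendsto_id))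
    fun s => h.transDen_mul_le x y z s t

variable {a : E}

lemma transDen_le_of_fixed_left (hPL : IsLongTimeLimit Px PL) (h : IsMaxitiveMarkov Px)
    (ha : ∀ t, transDen Px a t a = 1) (y : E) (t : ℝ≥0) : transDen Px a t y ≤ PL a y := by
  have hPLa : PL a a = 1 := tendsto_nhds_unique (hPL a a) (by simp only [ha, tendsto_const_nhds])
  simpa [hPLa] using hPL.mul_transDen_le h a a y t

lemma transDen_le_of_fixed_right (hPL : IsLongTimeLimit Px PL) (h : IsMaxitiveMarkov Px)
    (ha : ∀ t, transDen Px a t a = 1) (x : E) (t : ℝ≥0) : transDen Px x t a ≤ PL x a := by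
  have hshift : Tendsto (fun s => transDen Px x (t + s) a) atTop (𝓝 (PL x a)) :=
    (hPL x a).comp (tendsto_atTop_mono (fun _ => le_add_self) tendsto_id)
  refine ge_of_tendsto' hshift fun s => ?_
  simpa [ha] using h.transDen_mul_le x a a t s

end IsLongTimeLimit

/-! ### Hitting neighbourhoods of the attractors -/

lemma exists_forall_le_of_forall_mem_iInter_lt {X : Type*} [TopologicalSpace X] {f : X → ℝ}
    (hf : UpperSemicontinuous f) {C : ℕ → Set X} (hC : ∀ n, IsClosed (C n)) (hanti : Antitone C)
    {a b : ℝ} (hba : b < a) (hcomp : IsCompact (C 0 ∩ {x | b ≤ f x}))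
    (hlt : ∀ x ∈ ⋂ n, C n, f x < a) : ∃ n, ∃ c ∈ Ioo b a, ∀ x ∈ C n, f x ≤ c := by
  obtain ⟨u, hu, hub, hua⟩ := exists_seq_strictMono_tendsto' hba
  have hclosed (n : ℕ) : IsClosed (C n ∩ {x | u n ≤ f x}) :=
    (hC n).inter (hf.isClosed_preimage (u n))
  by_contra! hcon
  obtain ⟨x, hx⟩ := IsCompact.nonempty_iInter_of_sequence_nonempty_isCompact_isClosed
    (fun n => C n ∩ {x | u n ≤ f x})
    (fun n x hx => ⟨hanti n.le_succ hx.1, (hu.monotone n.le_succ).trans hx.2⟩)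
    (fun n => let ⟨x, hxC, hx⟩ := hcon n (u n) (hub n); ⟨x, hxC, hx.le⟩)
    (hcomp.of_isClosed_subset (hclosed 0) fun x hx => ⟨hx.1, (hub 0).1.le.trans hx.2⟩) hclosed
  rw [mem_iInter] at hx
  exact (hlt x (mem_iInter.2 fun n => (hx n).1)).not_ge (le_of_tendsto' hua fun n => (hx n).2)

/-- A maxitive Markov process whose cost-free paths approach `A`: the compactness conditions (2.2)
and (2.5) and the attraction condition (2.4)(i) of `DevSetup`. -/
structure RelaxesTo {E : Type*} [MetricSpace E] (Px : E → C(ℝ≥0, E) → ℝ) (A : Set E) : Prop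
    extends IsMaxitiveMarkov Px where
  usc : UpperSemicontinuous (fun q : E × C(ℝ≥0, E) => Px q.1 q.2)
  cpt : ∀ K : Set E, IsCompact K → ∀ γ ∈ Ioc (0 : ℝ) 1,
    IsCompact (⋃ x ∈ K, {X : C(ℝ≥0, E) | γ ≤ Px x X})
  attract : ∀ x (X : C(ℝ≥0, E)), Px x X = 1 → (⨅ t : ℝ≥0, infDist (X t) A) = 0
  tight : ∀ K₁ : Set E, IsCompact K₁ → ∀ ε : ℝ, 0 < ε → ∃ K₂ : Set E, IsCompact K₂ ∧
    limsup (fun t : ℝ≥0 => ⨆ x ∈ K₁, ⨆ y ∈ K₂ᶜ, transDen Px x t y) atTop < ε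

namespace RelaxesTo

variable {E : Type*} [MetricSpace E] {Px : E → C(ℝ≥0, E) → ℝ} {A K : Set E}

lemma exists_forall_far_le (h : RelaxesTo Px A) (hK : IsCompact K) {δ : ℝ} (hδ : 0 < δ) :
    ∃ T : ℝ≥0, ∃ c ∈ Ico (0 : ℝ) 1, ∀ X : C(ℝ≥0, E), X 0 ∈ K →
      (∀ s ≤ T, δ ≤ infDist (X s) A) → Px (X 0) X ≤ c := by
  have heval (s : ℝ≥0) : Continuous fun X : C(ℝ≥0, E) => X s := continuous_eval_const s
  have husc : UpperSemicontinuous fun X : C(ℝ≥0, E) => Px (X 0) X :=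
    h.usc.comp ((heval 0).prodMk continuous_id)
  let C (n : ℕ) : Set C(ℝ≥0, E) := {X | X 0 ∈ K ∧ ∀ s ≤ (n : ℝ≥0), δ ≤ infDist (X s) A}
  have hC (n : ℕ) : IsClosed (C n) := by
    have hfar : IsClosed {X : C(ℝ≥0, E) | ∀ s ≤ (n : ℝ≥0), δ ≤ infDist (X s) A} := by
      simp only [ofPred_forall]
      exact isClosed_iInter fun s => isClosed_iInter fun _ =>
        isClosed_le continuous_const ((continuous_infDist_pt A).comp (heval s))
    exact (hK.isClosed.preimage (heval 0)).inter hfar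
  have hanti : Antitone C := fun m n hmn X hX =>
    ⟨hX.1, fun s hs => hX.2 s (hs.trans (Nat.cast_le.2 hmn))⟩
  have hcomp : IsCompact (C 0 ∩ {X | 1 / 2 ≤ Px (X 0) X}) :=
    (h.cpt K hK (1 / 2) (by norm_num)).of_isClosed_subset
      ((hC 0).inter (husc.isClosed_preimage _)) fun X hX => mem_iUnion₂.2 ⟨X 0, hX.1.1, hX.2⟩
  have hlt : ∀ X ∈ ⋂ n, C n, Px (X 0) X < 1 := by
    refine fun X hX => ((h.dev _).le_one X).lt_of_ne fun hone => ?_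
    have hfar : δ ≤ ⨅ t : ℝ≥0, infDist (X t) A := le_ciInf fun t =>
      let ⟨n, hn⟩ := exists_nat_ge t; (mem_iInter.1 hX n).2 t hn
    exact (hδ.trans_le hfar).ne' (h.attract _ X hone)
  obtain ⟨n, c, hc, hle⟩ :=
    exists_forall_le_of_forall_mem_iInter_lt husc hC hanti one_half_lt_one hcomp hlt
  exact ⟨n, c, ⟨one_half_pos.le.trans hc.1.le, hc.2⟩, fun X hX hfar => hle X ⟨hX, hfar⟩⟩

end RelaxesTo

lemma IsMaxitiveMarkov.le_pow_of_forall_far_le {E : Type*} [MetricSpace E]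
    {Px : E → C(ℝ≥0, E) → ℝ} (h : IsMaxitiveMarkov Px) {K B : Set E} {T : ℝ≥0} {c : ℝ}
    (hc : 0 ≤ c)
    (hfar : ∀ X : C(ℝ≥0, E), X 0 ∈ K → (∀ s ≤ T, X s ∈ B) → Px (X 0) X ≤ c) (m : ℕ) :
    ∀ X : C(ℝ≥0, E), (∀ s, X s ∈ K) → (∀ s ≤ m * T, X s ∈ B) → Px (X 0) X ≤ c ^ m := by
  induction m with
  | zero => exact fun X _ _ => by simpa using (h.dev _).le_one X
  | succ m ih =>
    intro X hXK hXB
    have hmul : ((m + 1 : ℕ) : ℝ≥0) * T = T + m * T := by push_cast; ring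
    rw [h.markov (X 0) X T, pow_succ']
    refine mul_le_mul ?_ ?_ ((h.dev _).nonneg _) hc
    · refine biSup_le_of_nonneg hc fun Y hY => ?_
      have hY0 : Y 0 = X 0 := hY 0 zero_le
      rw [← hY0]
      refine hfar Y (hY0 ▸ hXK 0) fun s hs => ?_
      rw [hY s hs]
      exact hXB s (hs.trans (hmul ▸ le_self_add))
    · simpa [pshift] using ih (pshift T X) (fun s => hXK (T + s)) fun s hs =>
        hXB (T + s) (hmul ▸ by gcongr)

lemma RelaxesTo.exists_isCompact_transDen_lt {E : Type*} [MetricSpace E]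
    {Px : E → C(ℝ≥0, E) → ℝ} {A K : Set E} (h : RelaxesTo Px A) (hK : IsCompact K) {γ : ℝ}
    (hγ : 0 < γ) :
    ∃ L, IsCompact L ∧ ∀ᶠ t in atTop, ∀ x ∈ K, ∀ y ∉ L, transDen Px x t y < γ := by
  obtain ⟨L, hL, hlim⟩ := h.tight K hK γ hγ
  have hmem (t : ℝ≥0) (x : E) : ⨆ y ∈ Lᶜ, transDen Px x t y ∈ Icc (0 : ℝ) 1 :=
    biSup_mem_unitInterval fun y _ => (h.transDen_density x t).1 y
  have hbdd : IsBoundedUnder (· ≤ ·) atTop fun t => ⨆ x ∈ K, ⨆ y ∈ Lᶜ, transDen Px x t y :=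
    isBoundedUnder_of ⟨1, fun t => (biSup_mem_unitInterval fun x _ => hmem t x).2⟩
  refine ⟨L, hL, (eventually_lt_of_limsup_lt hlim hbdd).mono fun t ht x hx y hy => ?_⟩
  calc transDen Px x t y ≤ ⨆ y ∈ Lᶜ, transDen Px x t y :=
        le_biSup_of_mem_unitInterval (fun z _ => (h.transDen_density x t).1 z) hy
    _ ≤ ⨆ x ∈ K, ⨆ y ∈ Lᶜ, transDen Px x t y :=
        le_biSup_of_mem_unitInterval (f := fun x => ⨆ y ∈ Lᶜ, transDen Px x t y)
          (fun z _ => hmem t z) hx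
    _ < γ := ht

lemma RelaxesTo.exists_forall_exists_infDist_lt {E : Type*} [MetricSpace E]
    {Px : E → C(ℝ≥0, E) → ℝ} {A K : Set E} (h : RelaxesTo Px A) (hK : IsCompact K) {γ δ : ℝ}
    (hγ : 0 < γ) (hδ : 0 < δ) :
    ∃ T : ℝ≥0, ∀ x ∈ K, ∀ X : C(ℝ≥0, E), γ ≤ Px x X → ∃ s ≤ T, infDist (X s) A < δ := by
  obtain ⟨L, hL, hlt⟩ := h.exists_isCompact_transDen_lt hK hγ
  obtain ⟨T₁, hT₁⟩ := eventually_atTop.1 hlt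
  obtain ⟨T₀, c, hc, hfar⟩ := h.exists_forall_far_le hL hδ
  obtain ⟨m, hm⟩ := exists_pow_lt_of_lt_one hγ hc.2
  refine ⟨T₁ + m * T₀, fun x hx X hX => ?_⟩
  by_contra! hcon
  have hXL (s : ℝ≥0) : X (T₁ + s) ∈ L := by
    by_contra hs
    exact (hT₁ _ le_self_add x hx _ hs).not_ge (hX.trans (h.le_transDen x _ X))
  have hpow : Px (X T₁) (pshift T₁ X) ≤ c ^ m := by
    simpa [pshift] using h.le_pow_of_forall_far_le (B := {z | δ ≤ infDist z A}) hc.1 hfar m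
      (pshift T₁ X) hXL fun s hs => hcon (T₁ + s) (by gcongr)
  exact (hX.trans ((h.le_pshift x T₁ X).trans hpow)).not_gt hm

/-! ### Transitions through the attractors -/

/-- A maxitive Markov process relaxing to the set `A` of its attractors, with the equilibrium and
accessibility conditions (2.4)(ii), (iv) and (v) of `DevSetup`. -/
structure HasAttractors {E : Type*} [MetricSpace E] (Px : E → C(ℝ≥0, E) → ℝ) (A : Set E) : Prop
    extends RelaxesTo Px A where
  equil : ∀ a ∈ A, Px a (ContinuousMap.const ℝ≥0 a) = 1
  nearA : ∀ ε : ℝ, 0 < ε → ∃ δ : ℝ, 0 < δ ∧ ∀ x : E, infDist x A < δ →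
    ∃ s₀ s₁ : ℝ≥0, ∃ a ∈ A, 1 - ε < transDen Px x s₀ a ∧ 1 - ε < transDen Px a s₁ x
  localMove : ∀ x : E, ∀ ε : ℝ, 0 < ε → ∃ δ : ℝ, 0 < δ ∧ ∃ t₀ t₁ : ℝ≥0,
    ∀ x' : E, dist x x' < δ → 1 - ε < transDen Px x t₀ x' ∧ 1 - ε < transDen Px x' t₁ x

lemma DevSetup.hasAttractors {E : Type*} [MetricSpace E] {Px : E → C(ℝ≥0, E) → ℝ} {A : Set E}
    (h : DevSetup E Px A) : HasAttractors Px A where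
  __ := h
  nearA ε hε :=
    let ⟨δ, hδ, hnear⟩ := h.nearA ε hε
    ⟨δ, hδ, fun x hx => let ⟨s₀, s₁, _, _, ha⟩ := hnear x hx; ⟨s₀, s₁, ha⟩⟩

lemma le_add_of_mul_le {p q r ε : ℝ} (hp : p ∈ Icc (0 : ℝ) 1) (hε : 0 ≤ ε) (hq : 1 - ε < q)
    (h : p * q ≤ r) : p ≤ r + ε := by
  have hpq : p * (1 - ε) ≤ p * q := mul_le_mul_of_nonneg_left hq.le hp.1
  linarith [mul_le_of_le_one_left hε hp.2]

/-- The largest long-time density of moving from `x` to an attractor and on from there to `y`. -/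
def throughDen {E : Type*} (PL : E → E → ℝ) (A : Set E) (x y : E) : ℝ :=
  ⨆ b ∈ A, PL x b * PL b y

namespace HasAttractors

variable {E : Type*} [MetricSpace E] {Px : E → C(ℝ≥0, E) → ℝ} {A K : Set E} {PL : E → E → ℝ}

lemma transDen_self (h : HasAttractors Px A) {a : E} (ha : a ∈ A) (t : ℝ≥0) :
    transDen Px a t a = 1 :=
  le_antisymm ((h.transDen_density a t).le_one a)
    ((h.equil a ha).symm.trans_le (h.le_transDen a t (ContinuousMap.const ℝ≥0 a)))

lemma exists_attractor_transDen_le (h : HasAttractors Px A) (hPL : IsLongTimeLimit Px PL) {ε : ℝ}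
    (hε : 0 < ε) :
    ∃ δ > 0, ∀ z, infDist z A < δ → ∃ b ∈ A, (∀ x t, transDen Px x t z ≤ PL x b + ε) ∧
      ∀ y t, transDen Px z t y ≤ PL b y + ε := by
  obtain ⟨δ, hδ, hnear⟩ := h.nearA ε hε
  refine ⟨δ, hδ, fun z hz => ?_⟩
  obtain ⟨s₀, s₁, b, hb, hzb, hbz⟩ := hnear z hz
  refine ⟨b, hb, fun x t => ?_, fun y t => ?_⟩
  · have hxb := (h.transDen_mul_le x z b t s₀).trans
      (hPL.transDen_le_of_fixed_right h.toIsMaxitiveMarkov (h.transDen_self hb) x _)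
    exact le_add_of_mul_le ((h.transDen_density x t).1 z) hε.le hzb hxb
  · have hby := (h.transDen_mul_le b z y s₁ t).trans
      (hPL.transDen_le_of_fixed_left h.toIsMaxitiveMarkov (h.transDen_self hb) y _)
    rw [mul_comm] at hby
    exact le_add_of_mul_le ((h.transDen_density z t).1 y) hε.le hbz hby

lemma throughDen_mem_unitInterval (h : IsMaxitiveMarkov Px) (hPL : IsLongTimeLimit Px PL)
    (x y : E) : throughDen PL A x y ∈ Icc (0 : ℝ) 1 :=
  biSup_mem_unitInterval fun b _ =>
    unitInterval.mul_mem (hPL.mem_unitInterval h x b) (hPL.mem_unitInterval h b y)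

lemma eventually_transDen_le_throughDen (h : HasAttractors Px A) (hPL : IsLongTimeLimit Px PL)
    (hK : IsCompact K) {ε : ℝ} (hε : 0 < ε) :
    ∀ᶠ t in atTop, ∀ x ∈ K, ∀ y, transDen Px x t y ≤ throughDen PL A x y + ε := by
  have hmem := hPL.mem_unitInterval h.toIsMaxitiveMarkov
  obtain ⟨δ, hδ, hnear⟩ := h.exists_attractor_transDen_le hPL (half_pos hε)
  obtain ⟨T, hT⟩ := h.exists_forall_exists_infDist_lt hK hε hδ
  filter_upwards [eventually_ge_atTop T] with t ht x hx y
  rcases le_or_gt (transDen Px x t y) ε with hle | hgt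
  · exact hle.trans (le_add_of_nonneg_left
      (throughDen_mem_unitInterval h.toIsMaxitiveMarkov hPL x y).1)
  obtain ⟨X, rfl, hX⟩ := h.exists_eq_transDen (hε.trans hgt)
  obtain ⟨s, hs, hsA⟩ := hT x hx X (hgt.le.trans_eq hX.symm)
  obtain ⟨b, hb, hxb, hby⟩ := hnear (X s) hsA
  have hsecond := (h.transDen_density (X s) (t - s)).1 (X t)
  calc transDen Px x t (X t) = Px x X := hX.symm
    _ ≤ transDen Px x s (X s) * transDen Px (X s) (t - s) (X t) :=
        h.le_transDen_mul_transDen x (hs.trans ht) X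
    _ ≤ (PL x b + ε / 2) * transDen Px (X s) (t - s) (X t) :=
        mul_le_mul_of_nonneg_right (hxb x s) hsecond.1
    _ ≤ PL x b * transDen Px (X s) (t - s) (X t) + ε / 2 := by
        rw [add_mul]
        gcongr
        exact mul_le_of_le_one_right (half_pos hε).le hsecond.2
    _ ≤ PL x b * (PL b (X t) + ε / 2) + ε / 2 := by
        gcongr
        exacts [(hmem x b).1, hby (X t) (t - s)]
    _ ≤ PL x b * PL b (X t) + ε := by
        rw [mul_add]
        linarith [mul_le_of_le_one_left (half_pos hε).le (hmem x b).2]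
    _ ≤ throughDen PL A x (X t) + ε := by
        gcongr
        exact le_biSup_of_mem_unitInterval
          (fun a _ => unitInterval.mul_mem (hmem x a) (hmem a _)) hb

lemma eventually_mul_transDen_le (h : HasAttractors Px A) (hPL : IsLongTimeLimit Px PL)
    {ρ : E → ℝ} (hρ : IsDeviabilityDensity ρ) {ε : ℝ} (hε : 0 < ε) :
    ∀ᶠ t in atTop, ∀ x y, ρ x * transDen Px x t y ≤ ρ x * throughDen PL A x y + ε := by
  filter_upwards [h.eventually_transDen_le_throughDen hPL (hρ.isCompact_le hε) hε] with t ht x y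
  rcases le_or_gt ε (ρ x) with hx | hx
  · calc ρ x * transDen Px x t y ≤ ρ x * (throughDen PL A x y + ε) := by
          gcongr
          exacts [hρ.nonneg x, ht x hx y]
      _ ≤ ρ x * throughDen PL A x y + ε := by
          rw [mul_add]
          gcongr
          exact mul_le_of_le_one_left hε.le (hρ.le_one x)
  · calc ρ x * transDen Px x t y ≤ ρ x :=
          mul_le_of_le_one_right (hρ.nonneg x) ((h.transDen_density x t).le_one y)
      _ ≤ ρ x * throughDen PL A x y + ε := hx.le.trans (le_add_of_nonneg_left (mul_nonneg
          (hρ.nonneg x) (throughDen_mem_unitInterval h.toIsMaxitiveMarkov hPL x y).1))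

end HasAttractors

/-! ### Excessive functions -/

/-- The maxitive excessive functions of a transition density `p`: functions `h` with values in
`[0,1]` that dominate their own transport by `p`. -/
structure IsExcessive {E : Type*} (p : E → E → ℝ) (h : E → ℝ) : Prop where
  mem_unitInterval : ∀ x, h x ∈ Icc (0 : ℝ) 1
  mul_le : ∀ x y, h x * p x y ≤ h y

/-- Transition densities with values in `[0,1]` satisfying one half of the maxitive
Chapman–Kolmogorov equation, such as the long-time limit `Π(x,y)`. -/
structure IsSupermultiplicative {E : Type*} (p : E → E → ℝ) : Prop where
  mem_unitInterval : ∀ x y, p x y ∈ Icc (0 : ℝ) 1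
  mul_le : ∀ x y z, p x y * p y z ≤ p x z

lemma IsSupermultiplicative.isExcessive {E : Type*} {p : E → E → ℝ} (hp : IsSupermultiplicative p)
    (a : E) : IsExcessive p (p a) :=
  ⟨hp.mem_unitInterval a, hp.mul_le a⟩

lemma isExcessive_maxFluxPt {E : Type*} {p PL : E → E → ℝ} {ρ : E → ℝ}
    (hPL : ∀ a, IsExcessive p (PL a)) (hρ : ∀ x, ρ x ∈ Icc (0 : ℝ) 1) (hp : ∀ x y, 0 ≤ p x y)
    (Γ : Set E) : IsExcessive p (maxFluxPt PL ρ Γ) := by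
  have hmem (a x : E) : ρ a * PL a x ∈ Icc (0 : ℝ) 1 :=
    unitInterval.mul_mem (hρ a) ((hPL a).mem_unitInterval x)
  refine ⟨fun x => biSup_mem_unitInterval fun a _ => hmem a x, fun x y => ?_⟩
  simp only [maxFluxPt, Real.iSup_mul_of_nonneg (hp x y)]
  refine biSup_le_of_nonneg (biSup_nonneg_of_forall fun a _ => (hmem a y).1) fun a ha => ?_
  calc ρ a * PL a x * p x y = ρ a * (PL a x * p x y) := mul_assoc _ _ _
    _ ≤ ρ a * PL a y := mul_le_mul_of_nonneg_left ((hPL a).mul_le x y) (hρ a).1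
    _ ≤ ⨆ a ∈ Γ, ρ a * PL a y :=
        le_biSup_of_mem_unitInterval (f := fun a => ρ a * PL a y) (fun b _ => hmem b y) ha

namespace IsLongTimeLimit

variable {E : Type*} [MetricSpace E] {Px : E → C(ℝ≥0, E) → ℝ} {PL : E → E → ℝ}

lemma isExcessive_transDen (hPL : IsLongTimeLimit Px PL) (h : IsMaxitiveMarkov Px) (t : ℝ≥0)
    (a : E) : IsExcessive (fun x => transDen Px x t) (PL a) :=
  ⟨hPL.mem_unitInterval h a, fun x y => hPL.mul_transDen_le h a x y t⟩

lemma isExcessive (hPL : IsLongTimeLimit Px PL) {f : E → ℝ}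
    (hf : ∀ t, IsExcessive (fun x => transDen Px x t) f) : IsExcessive PL f :=
  ⟨(hf 0).mem_unitInterval, fun x y =>
    le_of_tendsto' ((hPL x y).const_mul (f x)) fun t => (hf t).mul_le x y⟩

lemma isSupermultiplicative (hPL : IsLongTimeLimit Px PL) (h : IsMaxitiveMarkov Px) :
    IsSupermultiplicative PL :=
  ⟨hPL.mem_unitInterval h, fun a =>
    (hPL.isExcessive fun t => hPL.isExcessive_transDen h t a).mul_le⟩

lemma isExcessive_of_stationaryLDConv [MeasurableSpace E] [BorelSpace E]
    (hPL : IsLongTimeLimit Px PL) {η : ℝ≥0 → ℕ → ProbabilityTheory.Kernel E E}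
    {μ : ℕ → Measure E} {r : ℕ → ℕ} {ρ : E → ℝ}
    (hη : ∀ t, StationaryLDConv (η t) μ r (fun x => transDen Px x t) ρ) : IsExcessive PL ρ :=
  hPL.isExcessive fun t => ⟨(hη t).measure_density.1, (hη t).mul_le⟩

end IsLongTimeLimit

lemma HasAttractors.continuous_of_isExcessive {E : Type*} [MetricSpace E]
    {Px : E → C(ℝ≥0, E) → ℝ} {A : Set E} (h : HasAttractors Px A) {f : E → ℝ}
    (hf : ∀ t, IsExcessive (fun x => transDen Px x t) f) : Continuous f := by
  have hmem := (hf 0).mem_unitInterval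
  refine Metric.continuous_iff'.2 fun x ε hε => ?_
  obtain ⟨δ, hδ, t₀, t₁, hmove⟩ := h.localMove x (ε / 2) (half_pos hε)
  filter_upwards [ball_mem_nhds x hδ] with y hy
  obtain ⟨hxy, hyx⟩ := hmove y (mem_ball'.1 hy)
  have hle := le_add_of_mul_le (hmem x) (half_pos hε).le hxy ((hf t₀).mul_le x y)
  have hge := le_add_of_mul_le (hmem y) (half_pos hε).le hyx ((hf t₁).mul_le y x)
  exact abs_sub_lt_iff.2 ⟨by linarith, by linarith⟩

lemma HasAttractors.continuous_maxFluxPt {E : Type*} [MetricSpace E]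
    {Px : E → C(ℝ≥0, E) → ℝ} {A : Set E} {PL : E → E → ℝ} {ρ : E → ℝ} (h : HasAttractors Px A)
    (hPL : IsLongTimeLimit Px PL) (hρ : ∀ x, ρ x ∈ Icc (0 : ℝ) 1) (Γ : Set E) :
    Continuous (maxFluxPt PL ρ Γ) :=
  h.continuous_of_isExcessive fun t =>
    isExcessive_maxFluxPt (hPL.isExcessive_transDen h.toIsMaxitiveMarkov t) hρ
      (fun x => (h.transDen_density x t).nonneg) Γ

/-! ### The max flux across a cut of the attractors -/

section MaxFlux

variable {E : Type*} {PL : E → E → ℝ} {ρ : E → ℝ} {Γ Γ' : Set E}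

lemma mul_le_maxFluxPt (hPL : IsSupermultiplicative PL) (hρ : ∀ x, ρ x ∈ Icc (0 : ℝ) 1) {a : E}
    (ha : a ∈ Γ) (x : E) : ρ a * PL a x ≤ maxFluxPt PL ρ Γ x :=
  le_biSup_of_mem_unitInterval (f := fun a => ρ a * PL a x)
    (fun b _ => unitInterval.mul_mem (hρ b) (hPL.mem_unitInterval b x)) ha

lemma mul_biSup_le_maxFlux (hPL : IsSupermultiplicative PL) (hρ : ∀ x, ρ x ∈ Icc (0 : ℝ) 1) {a : E}
    (ha : a ∈ Γ) : ρ a * ⨆ y ∈ Γ', PL a y ≤ maxFlux PL ρ Γ Γ' :=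
  le_biSup_of_mem_unitInterval (f := fun a => ρ a * ⨆ y ∈ Γ', PL a y) (fun b _ =>
    unitInterval.mul_mem (hρ b) (biSup_mem_unitInterval fun y _ => hPL.mem_unitInterval b y)) ha

lemma maxFlux_nonneg (hPL : IsSupermultiplicative PL) (hρ : ∀ x, ρ x ∈ Icc (0 : ℝ) 1) :
    0 ≤ maxFlux PL ρ Γ Γ' :=
  biSup_nonneg_of_forall fun a _ =>
    mul_nonneg (hρ a).1 (biSup_nonneg_of_forall fun y _ => (hPL.mem_unitInterval a y).1)

lemma maxFluxPt_le_maxFlux (hPL : IsSupermultiplicative PL) (hρ : ∀ x, ρ x ∈ Icc (0 : ℝ) 1) {y : E}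
    (hy : y ∈ Γ') : maxFluxPt PL ρ Γ y ≤ maxFlux PL ρ Γ Γ' := by
  refine biSup_le_of_nonneg (maxFlux_nonneg hPL hρ) fun a ha => ?_
  refine (mul_le_mul_of_nonneg_left ?_ (hρ a).1).trans (mul_biSup_le_maxFlux hPL hρ ha)
  exact le_biSup_of_mem_unitInterval (fun z _ => hPL.mem_unitInterval a z) hy

lemma maxFluxPt_mul_biSup_le_maxFlux (hPL : IsSupermultiplicative PL)
    (hρ : ∀ x, ρ x ∈ Icc (0 : ℝ) 1) (x : E) :
    maxFluxPt PL ρ Γ x * ⨆ y ∈ Γ', PL x y ≤ maxFlux PL ρ Γ Γ' := by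
  have hexc := isExcessive_maxFluxPt hPL.isExcessive hρ (fun x y => (hPL.mem_unitInterval x y).1) Γ
  simp only [Real.mul_iSup_of_nonneg (hexc.mem_unitInterval x).1]
  exact biSup_le_of_nonneg (maxFlux_nonneg hPL hρ) fun y hy =>
    (hexc.mul_le x y).trans (maxFluxPt_le_maxFlux hPL hρ hy)

variable {A' A'' : Set E} {c : ℝ} {x y : E}

lemma mul_le_of_le_maxFluxPt (hPL : IsSupermultiplicative PL) (hρ : ∀ x, ρ x ∈ Icc (0 : ℝ) 1)
    (hexit : 1 ≤ ⨆ a ∈ A' ∪ A'', PL x a) (hentry : ρ x ≤ maxFluxPt PL ρ (A' ∪ A'') x)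
    (hc : maxFlux PL ρ A'' A' < c) (hcc : maxFlux PL ρ A' A'' * maxFlux PL ρ A'' A' ≤ c * c)
    (hx : c ≤ maxFluxPt PL ρ A'' x) {b : E} (hb : b ∈ A') : ρ x * PL x b ≤ c := by
  have hPL0 := (hPL.mem_unitInterval x b).1
  have hc0 : 0 < c := (maxFlux_nonneg hPL hρ).trans_lt hc
  have hback : maxFluxPt PL ρ A'' x * PL x b ≤ maxFlux PL ρ A'' A' := by
    refine (mul_le_mul_of_nonneg_left ?_ (hc0.le.trans hx)).trans
      (maxFluxPt_mul_biSup_le_maxFlux hPL hρ x)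
    exact le_biSup_of_mem_unitInterval (fun z _ => hPL.mem_unitInterval x z) hb
  have hexit' : 1 ≤ ⨆ a ∈ A'', PL x a := by
    refine ((le_max_iff.1 (hexit.trans (biSup_union_le fun a _ =>
      hPL.mem_unitInterval x a))).resolve_left fun hone => ?_)
    exact (hc.trans_le (hx.trans (le_mul_of_one_le_right (hc0.le.trans hx) hone))).not_ge
      (maxFluxPt_mul_biSup_le_maxFlux hPL hρ x)
  have hentry' : ρ x ≤ max (maxFluxPt PL ρ A' x) (maxFluxPt PL ρ A'' x) :=
    hentry.trans (biSup_union_le fun a _ =>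
      unitInterval.mul_mem (hρ a) (hPL.mem_unitInterval a x))
  rcases le_max_iff.1 hentry' with hρx | hρx
  · have hforth : ρ x ≤ maxFlux PL ρ A' A'' := by
      refine hρx.trans ((le_mul_of_one_le_right ?_ hexit').trans
        (maxFluxPt_mul_biSup_le_maxFlux hPL hρ x))
      exact (hρ x).1.trans hρx
    refine le_of_mul_le_mul_left ?_ hc0
    calc c * (ρ x * PL x b) = ρ x * (c * PL x b) := by ring
      _ ≤ maxFlux PL ρ A' A'' * maxFlux PL ρ A'' A' :=
          mul_le_mul hforth ((mul_le_mul_of_nonneg_right hx hPL0).trans hback)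
            (mul_nonneg hc0.le hPL0) (maxFlux_nonneg hPL hρ)
      _ ≤ c * c := hcc
  · exact (mul_le_mul_of_nonneg_right hρx hPL0).trans (hback.trans hc.le)

lemma mul_throughDen_le (hPL : IsSupermultiplicative PL) (hρ : IsExcessive PL ρ)
    (hexit : 1 ≤ ⨆ a ∈ A' ∪ A'', PL x a) (hentry : ρ x ≤ maxFluxPt PL ρ (A' ∪ A'') x)
    (hc : maxFlux PL ρ A'' A' < c) (hcc : maxFlux PL ρ A' A'' * maxFlux PL ρ A'' A' ≤ c * c)
    (hx : c ≤ maxFluxPt PL ρ A'' x) (hy : maxFluxPt PL ρ A'' y ≤ c) :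
    ρ x * throughDen PL (A' ∪ A'') x y ≤ c := by
  simp only [throughDen, Real.mul_iSup_of_nonneg (hρ.mem_unitInterval x).1, ← mul_assoc]
  refine biSup_le_of_nonneg ((maxFlux_nonneg hPL hρ.mem_unitInterval).trans hc.le) fun b hb => ?_
  have hby := hPL.mem_unitInterval b y
  rcases hb with hb | hb
  · have hxb := mul_le_of_le_maxFluxPt hPL hρ.mem_unitInterval hexit hentry hc hcc hx hb
    exact (mul_le_of_le_one_right (mul_nonneg (hρ.mem_unitInterval x).1
      (hPL.mem_unitInterval x b).1) hby.2).trans hxb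
  · calc ρ x * PL x b * PL b y ≤ ρ b * PL b y := mul_le_mul_of_nonneg_right (hρ.mul_le x b) hby.1
      _ ≤ maxFluxPt PL ρ A'' y := mul_le_maxFluxPt hPL hρ.mem_unitInterval hb y
      _ ≤ c := hy

end MaxFlux

/-! ### Max balance -/

lemma HasAttractors.one_le_biSup {E : Type*} [MetricSpace E] {Px : E → C(ℝ≥0, E) → ℝ} {A : Set E}
    {PL : E → E → ℝ} (h : HasAttractors Px A) (hPL : IsLongTimeLimit Px PL) (x : E) :
    1 ≤ ⨆ a ∈ A, PL x a := by
  have hmem := hPL.mem_unitInterval h.toIsMaxitiveMarkov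
  have hthrough (y : E) : throughDen PL A x y ≤ ⨆ a ∈ A, PL x a :=
    biSup_le_of_nonneg (biSup_nonneg_of_forall fun a _ => (hmem x a).1) fun b hb =>
      (mul_le_of_le_one_right (hmem x b).1 (hmem b y).2).trans
        (le_biSup_of_mem_unitInterval (fun a _ => hmem x a) hb)
  refine le_of_forall_pos_le_add fun ε hε => ?_
  obtain ⟨t, ht⟩ := (h.eventually_transDen_le_throughDen hPL isCompact_singleton hε).exists
  have hle (y : E) : transDen Px x t y ≤ (⨆ a ∈ A, PL x a) + ε :=
    (ht x rfl y).trans (add_le_add_left (hthrough y) ε)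
  rw [← (h.transDen_density x t).2.1]
  exact Real.iSup_le hle (((h.transDen_density x t).nonneg x).trans (hle x))

namespace HasAttractors

variable {E : Type*} [MetricSpace E] [MeasurableSpace E] [BorelSpace E]
  {Px : E → C(ℝ≥0, E) → ℝ} {A A' A'' : Set E} {PL : E → E → ℝ} {ρ : E → ℝ}
  {η : ℝ≥0 → ℕ → ProbabilityTheory.Kernel E E} {μ : ℕ → Measure E} {r : ℕ → ℕ}

lemma le_maxFluxPt (h : HasAttractors Px A) (hPL : IsLongTimeLimit Px PL)
    (hη : ∀ t, StationaryLDConv (η t) μ r (fun x => transDen Px x t) ρ) (y : E) :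
    ρ y ≤ maxFluxPt PL ρ A y := by
  have hρdev := (hη 0).measure_density
  have hρ := hPL.isExcessive_of_stationaryLDConv hη
  have hPLs := hPL.isSupermultiplicative h.toIsMaxitiveMarkov
  have hthrough (x z : E) : ρ x * throughDen PL A x z ≤ maxFluxPt PL ρ A z := by
    simp only [throughDen, Real.mul_iSup_of_nonneg (hρdev.nonneg x), ← mul_assoc]
    refine biSup_le_of_nonneg (biSup_nonneg_of_forall fun b _ =>
      mul_nonneg (hρdev.nonneg b) (hPLs.mem_unitInterval b z).1) fun b hb => ?_
    exact (mul_le_mul_of_nonneg_right (hρ.mul_le x b) (hPLs.mem_unitInterval b z).1).trans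
      (mul_le_maxFluxPt hPLs hρdev.1 hb z)
  refine le_of_forall_pos_le_add fun ε hε => ?_
  obtain ⟨t, ht⟩ := (h.eventually_mul_transDen_le hPL hρdev (half_pos hε)).exists
  refine (hη t).le_of_forall_mul_le
    ((h.continuous_maxFluxPt hPL hρdev.1 A).tendsto y
      (Iio_mem_nhds (lt_add_of_pos_right _ (half_pos hε))))
    fun x z hz => ?_
  have hzy : maxFluxPt PL ρ A z < maxFluxPt PL ρ A y + ε / 2 := hz
  linarith [ht x z, hthrough x z]

lemma mul_le_of_forall_mul_throughDen_le (h : HasAttractors Px A) (hPL : IsLongTimeLimit Px PL)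
    (hη : ∀ t, StationaryLDConv (η t) μ r (fun x => transDen Px x t) ρ) {g : E → ℝ}
    (hg : Continuous g) {c : ℝ} (hc : 0 ≤ c)
    (hcut : ∀ x y, c ≤ g x → g y ≤ c → ρ x * throughDen PL A x y ≤ c) {x y : E} (hx : g x < c)
    (hy : c < g y) : ρ x * PL x y ≤ c := by
  refine le_of_forall_pos_le_add fun ε hε => ?_
  refine le_of_tendsto ((hPL x y).const_mul (ρ x)) ?_
  filter_upwards [h.eventually_mul_transDen_le hPL (hη 0).measure_density hε] with t ht
  exact (hη t).mul_le_of_forall_reverse_mul_le (isClosed_le continuous_const hg)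
    (isOpen_lt continuous_const hg) (fun z (hz : c < g z) => hz.le) (add_nonneg hc hε.le)
    (fun z hz w hw => (ht z w).trans (add_le_add_left (hcut z w hz (not_lt.1 hw)) ε))
    (not_le.2 hx) hy

lemma maxFlux_le_maxFlux_swap (h : HasAttractors Px (A' ∪ A'')) (hPL : IsLongTimeLimit Px PL)
    (hη : ∀ t, StationaryLDConv (η t) μ r (fun x => transDen Px x t) ρ) :
    maxFlux PL ρ A' A'' ≤ maxFlux PL ρ A'' A' := by
  have hρ := hPL.isExcessive_of_stationaryLDConv hη
  have hPLs := hPL.isSupermultiplicative h.toIsMaxitiveMarkov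
  by_contra! hlt
  obtain ⟨c, hc⟩ : ∃ c, c = (maxFlux PL ρ A' A'' + maxFlux PL ρ A'' A') / 2 := ⟨_, rfl⟩
  have hGc : maxFlux PL ρ A'' A' < c := by linarith
  have hcF : c < maxFlux PL ρ A' A'' := by linarith
  have hc0 : 0 ≤ c := (maxFlux_nonneg hPLs hρ.mem_unitInterval).trans hGc.le
  have hcc : maxFlux PL ρ A' A'' * maxFlux PL ρ A'' A' ≤ c * c := by
    rw [hc]
    nlinarith [sq_nonneg (maxFlux PL ρ A' A'' - maxFlux PL ρ A'' A')]
  have hcont := h.continuous_maxFluxPt hPL hρ.mem_unitInterval A''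
  have hcut (x y : E) (hx : c ≤ maxFluxPt PL ρ A'' x) (hy : maxFluxPt PL ρ A'' y ≤ c) :
      ρ x * throughDen PL (A' ∪ A'') x y ≤ c :=
    mul_throughDen_le hPLs hρ (h.one_le_biSup hPL x) (h.le_maxFluxPt hPL hη x) hGc hcc hx hy
  obtain ⟨a, ha, hac⟩ := exists_lt_of_lt_biSup hc0 hcF
  simp only [Real.mul_iSup_of_nonneg (hρ.mem_unitInterval a).1] at hac
  obtain ⟨b, hb, habc⟩ := exists_lt_of_lt_biSup hc0 hac
  have hgb : ρ b ≤ maxFluxPt PL ρ A'' b := by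
    have hbb : 1 ≤ PL b b := (h.transDen_self (mem_union_right A' hb) 0).symm.trans_le
      (hPL.transDen_le_of_fixed_left h.toIsMaxitiveMarkov
        (h.transDen_self (mem_union_right A' hb)) b 0)
    exact (le_mul_of_one_le_right (hρ.mem_unitInterval b).1 hbb).trans
      (mul_le_maxFluxPt hPLs hρ.mem_unitInterval hb b)
  exact habc.not_ge (h.mul_le_of_forall_mul_throughDen_le hPL hη hcont hc0 hcut
    ((maxFluxPt_le_maxFlux hPLs hρ.mem_unitInterval ha).trans_lt hGc)
    (habc.trans_le ((hρ.mul_le a b).trans hgb)))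

end HasAttractors

theorem stmt14_general {E : Type*} [MetricSpace E] [MeasurableSpace E] [BorelSpace E]
    {Px : E → C(ℝ≥0, E) → ℝ} {A' A'' : Set E} (h : HasAttractors Px (A' ∪ A''))
    {PL : E → E → ℝ} (hPL : IsLongTimeLimit Px PL)
    {η : ℝ≥0 → ℕ → ProbabilityTheory.Kernel E E} {μ : ℕ → Measure E} {r : ℕ → ℕ} {ρ : E → ℝ}
    (hη : ∀ t, StationaryLDConv (η t) μ r (fun x => transDen Px x t) ρ) :
    maxFlux PL ρ A' A'' = maxFlux PL ρ A'' A' :=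
  le_antisymm (h.maxFlux_le_maxFlux_swap hPL hη)
    ((union_comm A' A'' ▸ h).maxFlux_le_maxFlux_swap hPL hη)

theorem stmt14
    (Px : S → C(ℝ≥0, S) → ℝ) (A : Set S) (hyp : DevSetup S Px A)
    (PL : S → S → ℝ)
    (hPL : ∀ x y : S, Tendsto (fun t : ℝ≥0 => transDen Px x t y) atTop (𝓝 (PL x y)))
    (κ : ℕ → ℝ≥0 → ProbabilityTheory.Kernel S S)
    (hκ : ∀ n t, ProbabilityTheory.IsMarkovKernel (κ n t))
    (P : ℕ → Measure S) (hP : ∀ n, IsProbabilityMeasure (P n))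
    (hinv : ∀ n (t : ℝ≥0) (Γ : Set S), MeasurableSet Γ →
      P n Γ = ∫⁻ x, κ n t x Γ ∂(P n))
    (hκLD : ∀ (t : ℝ≥0) (x : S) (xs : ℕ → S), Tendsto xs atTop (𝓝 x) →
      LDConv (fun n => κ n t (xs n)) (fun n => n) (fun y => transDen Px x t y))
    (ρ : S → ℝ) (hρdev : IsDeviabilityDensity ρ)
    (φ : ℕ → ℕ) (hφ : StrictMono φ)
    (hρ : LDConv (fun k => P (φ k)) φ ρ) :
    ∀ A' A'' : Set S, A'.Nonempty → A''.Nonempty → Disjoint A' A'' → A' ∪ A'' = A →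
      maxFlux PL ρ A' A'' = maxFlux PL ρ A'' A' := by
  rintro A' A'' _ _ _ rfl
  exact stmt14_general hyp.hasAttractors hPL fun t => .of_strictMono hφ (hκ · t) hP (hinv · t)
    (fun x => hyp.hasAttractors.transDen_density x t) hρdev (hκLD t) hρ
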